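/- arXiv:2504.15555 — 5 statements merged into one kernel-verified Lean document; each statement's English description precedes it below -/
import Mathlib

section
/- Fix a bid-restricted auction with bid intervals {[b̲_i, b̄_i]}_{i=1}^M (0 ≤ b̲_1, b̄_M ≤ 1, b̲_i ≤ b̄_i, b̄_i < b̲_{i+1}; set b̄_0 = 0) and let u(q; b, β_{-}) be the expected payoff of a seller with quality q ∈ [0,1] who submits bid b against opponents' bid profile β_{-}, as defined in the context. Then the strategy β* given by β*(q) = q if q ∈ [b̲_i, b̄_i) for some i, β*(q) = b̲_i if q ∈ [b̄_{i−1}, b̲_i) for some i, and β*(q) = ⊥ (no bid) if q ≥ b̄_M, is weakly dominant: for every q ∈ [0,1], every opponents' profile β_{-} ∈ (A ∪ {⊥})^{n−1}, and every b ∈ A ∪ {⊥}, one has u(q; β*(q), β_{-}) ≥ u(q; b, β_{-}). -/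
open scoped Classical
open Set

/-- `b̄_{i-1}`, the upper endpoint of the bid interval preceding `i`, with the
convention `b̄₀ = 0`. -/
noncomputable def prevHi (M : ℕ) (bhi : Fin M → ℝ) (j : Fin M) : ℝ :=
  if j.val = 0 then 0 else bhi ⟨j.val - 1, lt_of_le_of_lt (Nat.sub_le _ _) j.isLt⟩

/-- The payoff of a seller with quality `q` who submits bid `b` (`none` = abstain) in a
bid-restricted auction with bid intervals `[blo i, bhi i]`, against the opponents' bid
profile `β`.  The seller gets `0` if she abstains or some opponent bids strictly below
her; if `k ≥ 1` opponents tie with her she gets `(b − q)/(k+1)`; if she is the strict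
lowest bidder she is paid the second-lowest bid `m` (equal to `b̄_M` if no opponent
bids), except that when her bid is the only bid in its interval `[blo i, bhi i]` and
`m = blo j` for some `j > i` with `k` opponents bidding `blo j`, she is paid the
reduced amount `(blo j + k·b̄_{j−1})/(k+1)`. -/
noncomputable def braPayoff (M : ℕ) (blo bhi : Fin M → ℝ) (N : ℕ)
    (q : ℝ) (b : Option ℝ) (β : Fin N → Option ℝ) : ℝ :=
  match b with
  | none => 0
  | some bb =>
    if ∃ j v, β j = some v ∧ v < bb then 0
    else
      let k : ℕ := (Finset.univ.filter fun j => β j = some bb).card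
      if 1 ≤ k then (bb - q) / (k + 1)
      else
        let m : ℝ :=
          if ∃ j v, β j = some v then sInf {v | ∃ j, β j = some v}
          else if h : M = 0 then 0
          else bhi ⟨M - 1, Nat.sub_lt (Nat.pos_of_ne_zero h) Nat.one_pos⟩
        if hsp : ∃ ij : Fin M × Fin M,
            bb ∈ Icc (blo ij.1) (bhi ij.1) ∧
            (∀ j v, β j = some v → v ∉ Icc (blo ij.1) (bhi ij.1)) ∧
            ij.1 < ij.2 ∧ m = blo ij.2 then
          (blo hsp.choose.2 +
              ((Finset.univ.filter fun j => β j = some (blo hsp.choose.2)).card : ℝ) *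
                prevHi M bhi hsp.choose.2) /
            (((Finset.univ.filter fun j => β j = some (blo hsp.choose.2)).card : ℝ) + 1)
            - q
        else m - q

/-!
Let `m` be the lowest opposing bid and `k` the number of opponents submitting it. A bid above `m`
earns `0`, a tie earns `(m - q) / (k + 1)`, and every bid below `m` earns the same amount, namely
`(m - q) / (k + 1) + k (p - q) / (k + 1)`, where `p` is the top of the preceding interval if `m` is
the bottom of a bid interval and `p = m` otherwise; if some allowed bid lies below `m`, then
`p ≤ m`. Hence undercutting is best if `q ≤ p`, tying is best if `p ≤ q ≤ m`, and losing is best if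
`m ≤ q`. The prescribed bid, which is `max q (blo i)` when `prevHi i ≤ q < bhi i`, makes this choice
whatever `m` is.
-/

/-- `[blo i, bhi i]` are nonempty, pairwise disjoint bid intervals listed in increasing order. -/
structure IsBidIntervals {M : ℕ} (blo bhi : Fin M → ℝ) : Prop where
  lo_le_hi : ∀ i, blo i ≤ bhi i
  hi_lt_lo : ∀ ⦃i j⦄, i < j → bhi i < blo j

/-- An admissible action: abstention, or a bid in one of the intervals `[blo i, bhi i]`. -/
def IsAllowedBid {M : ℕ} (blo bhi : Fin M → ℝ) (b : Option ℝ) : Prop :=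
  b = none ∨ ∃ v, b = some v ∧ ∃ i, v ∈ Icc (blo i) (bhi i)

/-- The set of bids actually submitted in the profile `β`, abstentions being discarded. -/
def submittedBids {ι : Type*} (β : ι → Option ℝ) : Set ℝ :=
  {v | ∃ j, β j = some v}

/-- The number `k` of opponents bidding exactly `v`. -/
noncomputable def bidCount {ι : Type*} [Fintype ι] (β : ι → Option ℝ) (v : ℝ) : ℕ :=
  (Finset.univ.filter fun j => β j = some v).card

/-- The quality `p` at which undercutting and matching the lowest opposing bid `m` pay the same:
the top of the preceding interval if `m` is the bottom of a bid interval, and `m` otherwise. -/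
noncomputable def undercutThreshold {M : ℕ} (blo bhi : Fin M → ℝ) : ℝ → ℝ :=
  Function.extend blo (prevHi M bhi) id

/-- The payment to a bidder who undercuts the lowest opposing bid `m`. If `m` is no lower endpoint,
the threshold is `m` and the average below collapses to the second-lowest bid `m`. -/
noncomputable def undercutPayment {ι : Type*} [Fintype ι] {M : ℕ} (blo bhi : Fin M → ℝ)
    (β : ι → Option ℝ) (m : ℝ) : ℝ :=
  (m + bidCount β m * undercutThreshold blo bhi m) / (bidCount β m + 1)

theorem exists_isLeast_submittedBids {ι : Type*} [Finite ι] {β : ι → Option ℝ}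
    (hne : (submittedBids β).Nonempty) : ∃ m, IsLeast (submittedBids β) m := by
  have hfin : (some ⁻¹' range β).Finite :=
    (finite_range β).preimage (Option.some_injective ℝ).injOn
  exact ⟨_, hne.csInf_mem hfin, fun _ hv => csInf_le hfin.bddBelow hv⟩

theorem exists_mem_Icc_of_mem_submittedBids {ι : Type*} {M : ℕ} {blo bhi : Fin M → ℝ}
    {β : ι → Option ℝ} {v : ℝ} (hβ : ∀ j, IsAllowedBid blo bhi (β j))
    (hv : v ∈ submittedBids β) : ∃ i, v ∈ Icc (blo i) (bhi i) := by
  obtain ⟨j, hj⟩ := hv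
  simpa [IsAllowedBid, hj] using hβ j

theorem bidCount_pos_iff {ι : Type*} [Fintype ι] {β : ι → Option ℝ} {v : ℝ} :
    0 < bidCount β v ↔ v ∈ submittedBids β := by
  simp [bidCount, submittedBids, Finset.card_pos, Finset.filter_nonempty_iff]

section Intervals

variable {M : ℕ} {blo bhi : Fin M → ℝ} {i j : Fin M} {q m : ℝ}

theorem exists_prevHi_le_and_lt_hi (hq : 0 ≤ q) (hj : q < bhi j) :
    ∃ i, prevHi M bhi i ≤ q ∧ q < bhi i := by
  obtain ⟨i, hi, hmin⟩ := wellFounded_lt.has_min {i | q < bhi i} ⟨j, hj⟩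
  refine ⟨i, ?_, hi⟩
  unfold prevHi
  split_ifs with hi0
  · exact hq
  · exact not_lt.mp fun hlt => hmin _ hlt (Fin.lt_def.mpr (Nat.sub_one_lt hi0))

theorem undercutThreshold_of_notMem_range (hm : m ∉ range blo) :
    undercutThreshold blo bhi m = m :=
  Function.extend_apply' _ _ _ hm

namespace IsBidIntervals

theorem of_lt_succ (hle : ∀ i, blo i ≤ bhi i)
    (hsep : ∀ i : Fin M, ∀ h : i.val + 1 < M, bhi i < blo ⟨i.val + 1, h⟩) :
    IsBidIntervals blo bhi where
  lo_le_hi := hle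
  hi_lt_lo := by
    rintro i ⟨j, hj⟩ (hij : i.val + 1 ≤ j)
    induction j, hij using Nat.le_induction with
    | base => exact hsep i hj
    | succ n _ ih =>
      exact (ih (by omega)).trans ((hle ⟨n, by omega⟩).trans_lt (hsep ⟨n, by omega⟩ hj))

variable (h : IsBidIntervals blo bhi)
include h

theorem strictMono_lo : StrictMono blo :=
  fun i _ hij => (h.lo_le_hi i).trans_lt (h.hi_lt_lo hij)

theorem strictMono_hi : StrictMono bhi :=
  fun _ j hij => (h.hi_lt_lo hij).trans_le (h.lo_le_hi j)

theorem hi_le_hi_last (i : Fin M) : bhi i ≤ bhi ⟨M - 1, Nat.sub_lt i.pos Nat.one_pos⟩ :=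
  h.strictMono_hi.monotone (Fin.le_def.mpr (Nat.le_sub_one_of_lt i.isLt))

theorem hi_le_prevHi (hij : i < j) : bhi i ≤ prevHi M bhi j := by
  have hij' : i.val < j.val := hij
  rw [prevHi, if_neg (by omega)]
  exact h.strictMono_hi.monotone (Fin.le_def.mpr (Nat.le_sub_one_of_lt hij'))

theorem prevHi_lt_lo (hij : i < j) : prevHi M bhi j < blo j := by
  have hj0 : j.val ≠ 0 := Nat.ne_zero_of_lt hij
  rw [prevHi, if_neg hj0]
  exact h.hi_lt_lo (Fin.lt_def.mpr (Nat.sub_one_lt hj0))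

theorem undercutThreshold_lo (i : Fin M) : undercutThreshold blo bhi (blo i) = prevHi M bhi i :=
  h.strictMono_lo.injective.extend_apply _ _ i

theorem undercutThreshold_le_self (hlt : blo i < m) : undercutThreshold blo bhi m ≤ m := by
  by_cases hm : m ∈ range blo
  · obtain ⟨l, rfl⟩ := hm
    rw [h.undercutThreshold_lo]
    exact (h.prevHi_lt_lo (h.strictMono_lo.lt_iff_lt.mp hlt)).le
  · exact (undercutThreshold_of_notMem_range hm).le

theorem max_lo_mem_Icc (hq : q ≤ bhi i) : max q (blo i) ∈ Icc (blo i) (bhi i) :=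
  ⟨le_max_right _ _, max_le hq (h.lo_le_hi i)⟩

theorem le_of_lt_max_lo (hq : prevHi M bhi i ≤ q) (hm : m ∈ Icc (blo j) (bhi j))
    (hlt : m < max q (blo i)) : m ≤ q := by
  rcases lt_max_iff.mp hlt with hmq | hmi
  · exact hmq.le
  · have hji : j < i := h.strictMono_lo.lt_iff_lt.mp (hm.1.trans_lt hmi)
    exact hm.2.trans ((h.hi_le_prevHi hji).trans hq)

theorem undercutThreshold_max_lo_le (hprev : prevHi M bhi i ≤ q) (hq : q ≤ bhi i) :
    undercutThreshold blo bhi (max q (blo i)) ≤ q := by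
  rcases le_or_gt q (blo i) with hqi | hiq
  · rwa [max_eq_right hqi, h.undercutThreshold_lo]
  · have hq_range : q ∉ range blo := by
      rintro ⟨l, rfl⟩
      exact hq.not_gt (h.hi_lt_lo (h.strictMono_lo.lt_iff_lt.mp hiq))
    rw [max_eq_left hiq.le, undercutThreshold_of_notMem_range hq_range]

theorem le_undercutThreshold (hq : q ≤ bhi i) (hlt : max q (blo i) < m) :
    q ≤ undercutThreshold blo bhi m := by
  obtain ⟨hqm, him⟩ := max_lt_iff.mp hlt
  by_cases hm : m ∈ range blo
  · obtain ⟨l, rfl⟩ := hm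
    rw [h.undercutThreshold_lo]
    exact hq.trans (h.hi_le_prevHi (h.strictMono_lo.lt_iff_lt.mp him))
  · rw [undercutThreshold_of_notMem_range hm]
    exact hqm.le

end IsBidIntervals

end Intervals

section Payoff

variable {M N : ℕ} {blo bhi : Fin M → ℝ} {β : Fin N → Option ℝ} {i : Fin M} {q m v C : ℝ}
  {b : Option ℝ}

theorem braPayoff_none : braPayoff M blo bhi N q none β = 0 := rfl

theorem braPayoff_some_of_submittedBids_eq_empty (hM : 1 ≤ M) (hβ : submittedBids β = ∅) :
    braPayoff M blo bhi N q (some v) β = bhi ⟨M - 1, Nat.sub_lt hM Nat.one_pos⟩ - q := by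
  have hnone : ∀ j w, β j ≠ some w := fun j w hj => hβ.le ⟨j, hj⟩
  simp only [braPayoff, hnone, false_and, exists_false, if_false, Finset.filter_false,
    Finset.card_empty, Nat.cast_zero, if_neg Nat.one_pos.not_ge, dif_neg (Nat.ne_of_gt hM),
    zero_mul, add_zero, zero_add, div_one, dite_eq_right_iff]
  intro hex
  rw [← hex.choose_spec.2.2.2]

theorem braPayoff_some_of_gt (hm : m ∈ submittedBids β) (hv : m < v) :
    braPayoff M blo bhi N q (some v) β = 0 := by
  obtain ⟨j, hj⟩ := hm
  exact if_pos ⟨j, m, hj, hv⟩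

theorem braPayoff_some_of_isLeast (hm : IsLeast (submittedBids β) m) :
    braPayoff M blo bhi N q (some m) β = (m - q) / (bidCount β m + 1) := by
  have hlow : ¬∃ j w, β j = some w ∧ w < m := fun ⟨j, w, hj, hw⟩ => (hm.2 ⟨j, hj⟩).not_gt hw
  exact (if_neg hlow).trans (if_pos (bidCount_pos_iff.mpr hm.1))

theorem braPayoff_some_of_lt (h : IsBidIntervals blo bhi) (hm : IsLeast (submittedBids β) m)
    (hv : v ∈ Icc (blo i) (bhi i)) (hvm : v < m) :
    braPayoff M blo bhi N q (some v) β = undercutPayment blo bhi β m - q := by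
  have hlow : ¬∃ j w, β j = some w ∧ w < v :=
    fun ⟨j, w, hj, hw⟩ => (hm.2 ⟨j, hj⟩).not_gt (hw.trans hvm)
  have htie : ¬1 ≤ bidCount β v := fun hk => (hm.2 (bidCount_pos_iff.mp hk)).not_gt hvm
  have hbids : ∃ j w, β j = some w := hm.1.imp fun _ hj => ⟨m, hj⟩
  have hInf : sInf {w | ∃ j, β j = some w} = m := hm.csInf_eq
  unfold bidCount at htie
  simp only [braPayoff, if_neg hlow, if_neg htie, if_pos hbids, hInf]
  split_ifs with hex
  · obtain ⟨-, -, -, hml⟩ := hex.choose_spec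
    have hthreshold : undercutThreshold blo bhi m = prevHi M bhi hex.choose.2 := by
      rw [← h.undercutThreshold_lo, ← hml]
    rw [undercutPayment, bidCount, hthreshold, ← hml]
  · have hm_range : m ∉ range blo := by
      rintro ⟨l, rfl⟩
      have hil : i < l := h.strictMono_lo.lt_iff_lt.mp (hv.1.trans_lt hvm)
      exact hex ⟨(i, l), hv,
        fun j w hj hw => (hm.2 ⟨j, hj⟩).not_gt (hw.2.trans_lt (h.hi_lt_lo hil)), hil, rfl⟩
    rw [undercutPayment, undercutThreshold_of_notMem_range hm_range]
    field_simp
    ring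

theorem undercutPayment_sub : undercutPayment blo bhi β m - q =
    (m - q) / (bidCount β m + 1) +
      bidCount β m * (undercutThreshold blo bhi m - q) / (bidCount β m + 1) := by
  unfold undercutPayment
  field_simp
  ring

theorem braPayoff_le_of_isLeast (h : IsBidIntervals blo bhi) (hm : IsLeast (submittedBids β) m)
    (hb : IsAllowedBid blo bhi b) (hlose : 0 ≤ C) (htie : (m - q) / (bidCount β m + 1) ≤ C)
    (hundercut : undercutThreshold blo bhi m ≤ m → undercutPayment blo bhi β m - q ≤ C) :
    braPayoff M blo bhi N q b β ≤ C := by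
  obtain rfl | ⟨v, rfl, i, hv⟩ := hb
  · exact hlose
  rcases lt_trichotomy v m with hvm | rfl | hmv
  · rw [braPayoff_some_of_lt h hm hv hvm]
    exact hundercut (h.undercutThreshold_le_self (hv.1.trans_lt hvm))
  · rwa [braPayoff_some_of_isLeast hm]
  · rwa [braPayoff_some_of_gt hm.1 hmv]

theorem braPayoff_nonpos_of_isLeast_le (h : IsBidIntervals blo bhi)
    (hm : IsLeast (submittedBids β) m) (hb : IsAllowedBid blo bhi b) (hmq : m ≤ q) :
    braPayoff M blo bhi N q b β ≤ 0 := by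
  have htie : (m - q) / (bidCount β m + 1 : ℝ) ≤ 0 :=
    div_nonpos_of_nonpos_of_nonneg (sub_nonpos.mpr hmq) (by positivity)
  refine braPayoff_le_of_isLeast h hm hb le_rfl htie fun hp => ?_
  rw [undercutPayment_sub]
  refine add_nonpos htie (div_nonpos_of_nonpos_of_nonneg ?_ (by positivity))
  exact mul_nonpos_of_nonneg_of_nonpos (by positivity) (sub_nonpos.mpr (hp.trans hmq))

theorem braPayoff_le_of_undercutThreshold_le (h : IsBidIntervals blo bhi)
    (hm : IsLeast (submittedBids β) m) (hb : IsAllowedBid blo bhi b)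
    (hpq : undercutThreshold blo bhi m ≤ q) (hqm : q ≤ m) :
    braPayoff M blo bhi N q b β ≤ (m - q) / (bidCount β m + 1) := by
  refine braPayoff_le_of_isLeast h hm hb
    (div_nonneg (sub_nonneg.mpr hqm) (by positivity)) le_rfl fun _ => ?_
  rw [undercutPayment_sub]
  refine add_le_of_nonpos_right (div_nonpos_of_nonpos_of_nonneg ?_ (by positivity))
  exact mul_nonpos_of_nonneg_of_nonpos (by positivity) (sub_nonpos.mpr hpq)

theorem braPayoff_le_of_le_undercutThreshold (h : IsBidIntervals blo bhi)
    (hm : IsLeast (submittedBids β) m) (hb : IsAllowedBid blo bhi b)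
    (hqp : q ≤ undercutThreshold blo bhi m) (hqm : q ≤ m) :
    braPayoff M blo bhi N q b β ≤ undercutPayment blo bhi β m - q := by
  have hlose : 0 ≤ (m - q) / (bidCount β m + 1 : ℝ) :=
    div_nonneg (sub_nonneg.mpr hqm) (by positivity)
  have htie : (m - q) / (bidCount β m + 1) ≤ undercutPayment blo bhi β m - q := by
    rw [undercutPayment_sub]
    exact le_add_of_nonneg_right
      (div_nonneg (mul_nonneg (by positivity) (sub_nonneg.mpr hqp)) (by positivity))
  exact braPayoff_le_of_isLeast h hm hb (hlose.trans htie) htie fun _ => le_rfl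

theorem braPayoff_le_none (h : IsBidIntervals blo bhi) (hβ : ∀ j, IsAllowedBid blo bhi (β j))
    (hb : IsAllowedBid blo bhi b) (hq : ∀ i, bhi i ≤ q) :
    braPayoff M blo bhi N q b β ≤ braPayoff M blo bhi N q none β := by
  rw [braPayoff_none]
  rcases (submittedBids β).eq_empty_or_nonempty with hempty | hne
  · obtain rfl | ⟨v, rfl, i, -⟩ := hb
    · exact braPayoff_none.le
    · rw [braPayoff_some_of_submittedBids_eq_empty i.pos hempty]
      exact sub_nonpos.mpr (hq _)
  · obtain ⟨m, hm⟩ := exists_isLeast_submittedBids hne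
    obtain ⟨l, hml⟩ := exists_mem_Icc_of_mem_submittedBids hβ hm.1
    exact braPayoff_nonpos_of_isLeast_le h hm hb (hml.2.trans (hq l))

theorem braPayoff_le_max_lo (h : IsBidIntervals blo bhi) (hβ : ∀ j, IsAllowedBid blo bhi (β j))
    (hb : IsAllowedBid blo bhi b) (hprev : prevHi M bhi i ≤ q) (hq : q ≤ bhi i) :
    braPayoff M blo bhi N q b β ≤ braPayoff M blo bhi N q (some (max q (blo i))) β := by
  rcases (submittedBids β).eq_empty_or_nonempty with hempty | hne
  · rw [braPayoff_some_of_submittedBids_eq_empty i.pos hempty]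
    obtain rfl | ⟨v, rfl, -⟩ := hb
    · exact sub_nonneg.mpr (hq.trans (h.hi_le_hi_last i))
    · exact (braPayoff_some_of_submittedBids_eq_empty i.pos hempty).le
  · obtain ⟨m, hm⟩ := exists_isLeast_submittedBids hne
    rcases lt_trichotomy (max q (blo i)) m with hlt | rfl | hgt
    · rw [braPayoff_some_of_lt h hm (h.max_lo_mem_Icc hq) hlt]
      exact braPayoff_le_of_le_undercutThreshold h hm hb (h.le_undercutThreshold hq hlt)
        ((le_max_left _ _).trans hlt.le)
    · rw [braPayoff_some_of_isLeast hm]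
      exact braPayoff_le_of_undercutThreshold_le h hm hb
        (h.undercutThreshold_max_lo_le hprev hq) (le_max_left _ _)
    · rw [braPayoff_some_of_gt hm.1 hgt]
      obtain ⟨l, hml⟩ := exists_mem_Icc_of_mem_submittedBids hβ hm.1
      exact braPayoff_nonpos_of_isLeast_le h hm hb (h.le_of_lt_max_lo hprev hml hgt)

end Payoff

theorem stmt_5_general {M N : ℕ} (hM : 1 ≤ M) {blo bhi : Fin M → ℝ} (h : IsBidIntervals blo bhi)
    {βstar : ℝ → Option ℝ}
    (hβ1 : ∀ i : Fin M, ∀ q ∈ Ico (blo i) (bhi i), βstar q = some q)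
    (hβ2 : ∀ i : Fin M, ∀ q ∈ Ico (prevHi M bhi i) (blo i), βstar q = some (blo i))
    (hβ3 : ∀ q : ℝ, bhi ⟨M - 1, Nat.sub_lt hM Nat.one_pos⟩ ≤ q → βstar q = none)
    {q : ℝ} (hq : 0 ≤ q) {β : Fin N → Option ℝ} (hβ : ∀ j, IsAllowedBid blo bhi (β j))
    {b : Option ℝ} (hb : IsAllowedBid blo bhi b) :
    braPayoff M blo bhi N q b β ≤ braPayoff M blo bhi N q (βstar q) β := by
  rcases le_or_gt (bhi ⟨M - 1, Nat.sub_lt hM Nat.one_pos⟩) q with hlast | hlast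
  · rw [hβ3 q hlast]
    exact braPayoff_le_none h hβ hb fun i => (h.hi_le_hi_last i).trans hlast
  · obtain ⟨i, hprev, hqi⟩ := exists_prevHi_le_and_lt_hi hq hlast
    have hstar : βstar q = some (max q (blo i)) := by
      rcases le_or_gt (blo i) q with hiq | hqi'
      · rw [max_eq_left hiq, hβ1 i q ⟨hiq, hqi⟩]
      · rw [max_eq_right hqi'.le, hβ2 i q ⟨hprev, hqi'⟩]
    rw [hstar]
    exact braPayoff_le_max_lo h hβ hb hprev hqi.le

/-- **Lemma 2.** In a bid-restricted auction, the strategy that bids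
one's quality on the bid intervals, bids `blo i` on the gap below interval `i`, and
abstains above `b̄_M`, is weakly dominant. -/
theorem stmt_5 (M : ℕ) (hM : 1 ≤ M) (blo bhi : Fin M → ℝ)
    (hlo0 : 0 ≤ blo ⟨0, hM⟩)
    (hhiM : bhi ⟨M - 1, Nat.sub_lt hM Nat.one_pos⟩ ≤ 1)
    (hle : ∀ i, blo i ≤ bhi i)
    (hsep : ∀ i : Fin M, ∀ h : i.val + 1 < M, bhi i < blo ⟨i.val + 1, h⟩)
    (N : ℕ)
    (βstar : ℝ → Option ℝ)
    (hβ1 : ∀ i : Fin M, ∀ q ∈ Ico (blo i) (bhi i), βstar q = some q)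
    (hβ2 : ∀ i : Fin M, ∀ q ∈ Ico (prevHi M bhi i) (blo i), βstar q = some (blo i))
    (hβ3 : ∀ q : ℝ, bhi ⟨M - 1, Nat.sub_lt hM Nat.one_pos⟩ ≤ q → βstar q = none) :
    ∀ q ∈ Icc (0:ℝ) 1, ∀ β : Fin N → Option ℝ,
      (∀ j, β j = none ∨ ∃ v, β j = some v ∧ ∃ i, v ∈ Icc (blo i) (bhi i)) →
      ∀ b : Option ℝ,
        (b = none ∨ ∃ v, b = some v ∧ ∃ i, v ∈ Icc (blo i) (bhi i)) →
        braPayoff M blo bhi N q b β ≤ braPayoff M blo bhi N q (βstar q) β := by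
  intro q hq β hβ b hb
  exact stmt_5_general hM (.of_lt_succ hle hsep) hβ1 hβ2 hβ3 hq.1 hβ hb
end

section
/- Let n ≥ 2 and let { [s̲_i, s̄_i) }_{i=1}^L be pairwise disjoint intervals contained in [0, S̄] for some S̄ ∈ (0,1], ordered so that s̄_i ≤ s̲_{i+1}. Consider n sellers with i.i.d. Uniform[0,1] quality quantiles, each of whom bids according to β: β(t) = t if t ∈ [0, S̄) \ ∪_{i=1}^L [s̲_i, s̄_i), β(t) = s̄_i if t ∈ [s̲_i, s̄_i), and β(t) = ⊥ (no bid) if t ≥ S̄; the seller with the lowest submitted bid wins, ties among k+1 lowest bidders are broken uniformly (each wins with probability 1/(k+1)), and sellers who do not bid never win. Then the probability that a seller with quantile s wins equals: (1−s)^{n−1} if s ∈ [0, S̄) \ ∪_{i=1}^L [s̲_i, s̄_i) and s is not equal to any s̄_i; (∫_{s̲_i}^{s̄_i} (1−t)^{n−1} dt)/(s̄_i − s̲_i) if s ∈ [s̲_i, s̄_i) for some i; and 0 if s > S̄. -/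
open scoped Classical
open MeasureTheory Set

/-- Conditional winning indicator under lowest-bid-wins with uniform tie-breaking:
given the bidding strategy `β` (with `none` = abstain), a seller with quantile `s`
facing opponents' quantiles `t` gets `0` if she abstains or some opponent bids
strictly below her, and otherwise wins with probability `1/(k+1)` where `k` is the
number of opponents whose bid equals hers. -/
noncomputable def tieWin (N : ℕ) (β : ℝ → Option ℝ) (s : ℝ) (t : Fin N → ℝ) : ℝ :=
  match β s with
  | none => 0
  | some bb =>
    if ∃ j v, β (t j) = some v ∧ v < bb then 0
    else 1 / (((Finset.univ.filter fun j => β (t j) = some bb).card : ℝ) + 1)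

/-- The probability that a seller with quantile `s` wins against `N` i.i.d.
`Uniform[0,1]` opponents, all bidding according to `β`. -/
noncomputable def winProb (N : ℕ) (β : ℝ → Option ℝ) (s : ℝ) : ℝ :=
  ∫ t : Fin N → ℝ, tieWin N β s t
    ∂(Measure.pi fun _ => volume.restrict (Icc (0:ℝ) 1))

/-!
Uniform tie-breaking can be run through one extra uniform draw `x`: conditionally on `x`, the seller
beats each tied opponent independently with probability `x`, and `∫₀¹ xᵏ dx = 1 / (k + 1)` is her
chance against `k` of them. After exchanging the two integrals the opponents become independent, so
that the winning probability is `∫₀¹ (p x + q) ^ N dx`, where `p` and `q` are the probabilities that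
one opponent ties, respectively loses. For a pool `[a, b)` these are `b - a` and `1 - b`, up to
the null event that an opponent sits exactly at `b`; a linear substitution finishes the proof, and
non-pooled quantiles are the degenerate pool `a = b`.
-/

section Lottery

variable {ι α : Type*}

/-- The chance of beating an opponent of type `u`, given the tie-breaking draw `x`, when opponents
in `T` tie, opponents in `W` lose, and all others win. -/
noncomputable def beatWeight (T W : Set α) (x : ℝ) (u : α) : ℝ :=
  T.indicator (fun _ ↦ x) u + W.indicator (fun _ ↦ 1) u

variable {T W : Set α} {x : ℝ}

lemma beatWeight_of_disjoint (hTW : Disjoint T W) (u : α) :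
    beatWeight T W x u = if u ∈ T then x else if u ∈ W then 1 else 0 := by
  have : u ∈ T → u ∉ W := fun hT ↦ disjoint_left.1 hTW hT
  by_cases hT : u ∈ T <;> simp_all [beatWeight, indicator_apply]

lemma beatWeight_mem_Icc (hTW : Disjoint T W) (hx : x ∈ Icc (0 : ℝ) 1) (u : α) :
    beatWeight T W x u ∈ Icc (0 : ℝ) 1 := by
  rw [beatWeight_of_disjoint hTW]
  split_ifs <;> simp [hx.1, hx.2]

lemma aemeasurable_beatWeight_comp {Ω : Type*} [MeasurableSpace Ω] [MeasurableSpace α]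
    {μ : Measure α} {ν : Measure Ω} {X : Ω → ℝ} {φ : Ω → α} (hT : NullMeasurableSet T μ)
    (hW : NullMeasurableSet W μ) (hX : AEMeasurable X ν)
    (hφ : Measure.QuasiMeasurePreserving φ ν μ) :
    AEMeasurable (fun p ↦ beatWeight T W (X p) (φ p)) ν :=
  (hX.indicator₀ (hT.preimage hφ)).add (aemeasurable_const.indicator₀ (hW.preimage hφ))

variable [Fintype ι]

lemma prod_beatWeight (hTW : Disjoint T W) (t : ι → α) :
    ∏ j, beatWeight T W x (t j) =
      (univ.pi fun _ ↦ T ∪ W).indicator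
        (fun t ↦ x ^ (Finset.univ.filter fun j ↦ t j ∈ T).card) t := by
  simp only [beatWeight_of_disjoint hTW, indicator_apply, mem_univ_pi, mem_union]
  split_ifs with hmem
  · rw [← Finset.prod_const, Finset.prod_filter]
    refine Finset.prod_congr rfl fun j _ ↦ ?_
    rcases hmem j with hj | hj <;> simp [hj]
  · push Not at hmem
    obtain ⟨j, hj⟩ := hmem
    exact Finset.prod_eq_zero (Finset.mem_univ j) (by simp [hj])

lemma integral_prod_beatWeight (hTW : Disjoint T W) (t : ι → α) :
    ∫ x in (0 : ℝ)..1, ∏ j, beatWeight T W x (t j) =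
      (univ.pi fun _ ↦ T ∪ W).indicator
        (fun t ↦ 1 / (((Finset.univ.filter fun j ↦ t j ∈ T).card : ℝ) + 1)) t := by
  simp only [prod_beatWeight hTW, indicator_apply]
  split_ifs <;> simp

variable [MeasurableSpace α] {μ : Measure α} [IsFiniteMeasure μ]

lemma integral_beatWeight (hT : NullMeasurableSet T μ) (hW : NullMeasurableSet W μ) (x : ℝ) :
    ∫ u, beatWeight T W x u ∂μ = μ.real T * x + μ.real W := by
  have integrable_indicator {S : Set α} (hS : NullMeasurableSet S μ) (c : ℝ) :
      Integrable (S.indicator fun _ ↦ c) μ := (integrable_const c).indicator₀ hS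
  simp only [beatWeight]
  rw [integral_add (integrable_indicator hT x) (integrable_indicator hW 1),
    integral_indicator₀ hT, integral_indicator₀ hW]
  simp

lemma integral_pi_prod_beatWeight (hT : NullMeasurableSet T μ) (hW : NullMeasurableSet W μ)
    (x : ℝ) :
    ∫ t : ι → α, ∏ j, beatWeight T W x (t j) ∂(Measure.pi fun _ ↦ μ) =
      (μ.real T * x + μ.real W) ^ Fintype.card ι := by
  rw [integral_fintype_prod_eq_prod fun (_ : ι) ↦ beatWeight T W x]
  simp [integral_beatWeight hT hW]

lemma integrable_prod_beatWeight_uncurry (hTW : Disjoint T W) (hT : NullMeasurableSet T μ)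
    (hW : NullMeasurableSet W μ) :
    Integrable (Function.uncurry fun (t : ι → α) x ↦ ∏ j, beatWeight T W x (t j))
      ((Measure.pi fun _ ↦ μ).prod (volume.restrict (Ioc (0 : ℝ) 1))) := by
  refine Integrable.of_bound (C := 1) (AEMeasurable.aestronglyMeasurable ?_) ?_
  · refine Finset.aemeasurable_fun_prod _ fun j _ ↦ ?_
    exact aemeasurable_beatWeight_comp hT hW measurable_snd.aemeasurable
      ((Measure.quasiMeasurePreserving_eval _ j).comp Measure.quasiMeasurePreserving_fst)
  · filter_upwards [Measure.quasiMeasurePreserving_snd.ae (ae_restrict_mem measurableSet_Ioc)]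
      with ⟨t, x⟩ hx
    have mem_Icc (j : ι) := beatWeight_mem_Icc hTW (Ioc_subset_Icc_self hx) (t j)
    rw [Function.uncurry_apply_pair,
      Real.norm_of_nonneg (Finset.prod_nonneg fun j _ ↦ (mem_Icc j).1)]
    exact Finset.prod_le_one (fun j _ ↦ (mem_Icc j).1) fun j _ ↦ (mem_Icc j).2

theorem integral_pi_uniform_tieBreak (hTW : Disjoint T W) (hT : NullMeasurableSet T μ)
    (hW : NullMeasurableSet W μ) :
    ∫ t : ι → α, (univ.pi fun _ ↦ T ∪ W).indicator
        (fun t ↦ 1 / (((Finset.univ.filter fun j ↦ t j ∈ T).card : ℝ) + 1)) t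
        ∂(Measure.pi fun _ ↦ μ) =
      ∫ x in (0 : ℝ)..1, (μ.real T * x + μ.real W) ^ Fintype.card ι := by
  simp only [← integral_prod_beatWeight hTW, ← integral_pi_prod_beatWeight (ι := ι) hT hW,
    intervalIntegral.integral_of_le zero_le_one]
  exact integral_integral_swap (integrable_prod_beatWeight_uncurry hTW hT hW)

end Lottery

section WinProb

variable {N : ℕ} {β : ℝ → Option ℝ} {s a b : ℝ}

/-- The opponents who tie with a seller bidding `b`. -/
def tieSet (β : ℝ → Option ℝ) (b : ℝ) : Set ℝ := {u | β u = some b}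

/-- The opponents who lose against a seller bidding `b`, either by abstaining or by bidding
strictly more. -/
def loseSet (β : ℝ → Option ℝ) (b : ℝ) : Set ℝ := {u | ∀ v, β u = some v → b < v}

lemma disjoint_tieSet_loseSet (β : ℝ → Option ℝ) (b : ℝ) :
    Disjoint (tieSet β b) (loseSet β b) :=
  disjoint_left.2 fun _ hT hW ↦ lt_irrefl b (hW b hT)

lemma mem_tieSet_union_loseSet {u : ℝ} :
    u ∈ tieSet β b ∪ loseSet β b ↔ ∀ v, β u = some v → b ≤ v := by
  cases h : β u <;> simp [tieSet, loseSet, h, le_iff_eq_or_lt, eq_comm]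

lemma tieWin_of_eq_some (hs : β s = some b) (t : Fin N → ℝ) :
    tieWin N β s t = (univ.pi fun _ ↦ tieSet β b ∪ loseSet β b).indicator
      (fun t ↦ 1 / (((Finset.univ.filter fun j ↦ t j ∈ tieSet β b).card : ℝ) + 1)) t := by
  have no_lower_bid_iff : t ∈ univ.pi (fun _ ↦ tieSet β b ∪ loseSet β b) ↔
      ¬∃ j v, β (t j) = some v ∧ v < b := by
    simp only [mem_univ_pi, mem_tieSet_union_loseSet]
    push Not
    rfl
  simp only [tieWin, hs, indicator_apply, no_lower_bid_iff, ite_not]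
  congr!

lemma winProb_of_eq_none (hs : β s = none) : winProb N β s = 0 := by
  simp [winProb, tieWin, hs]

lemma winProb_of_eq_some (hs : β s = some b)
    (hT : NullMeasurableSet (tieSet β b) (volume.restrict (Icc (0 : ℝ) 1)))
    (hW : NullMeasurableSet (loseSet β b) (volume.restrict (Icc (0 : ℝ) 1))) :
    winProb N β s = ∫ x in (0 : ℝ)..1,
      ((volume.restrict (Icc (0 : ℝ) 1)).real (tieSet β b) * x +
        (volume.restrict (Icc (0 : ℝ) 1)).real (loseSet β b)) ^ N := by
  simp only [winProb, tieWin_of_eq_some hs]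
  rw [integral_pi_uniform_tieBreak (disjoint_tieSet_loseSet β b) hT hW, Fintype.card_fin]

lemma ae_mem_tieSet_iff_and_mem_loseSet_iff (hab : a ≤ b)
    (hlow : ∀ u ∈ Ico 0 a, ∃ v, β u = some v ∧ v < b)
    (hpool : ∀ u ∈ Ico a b, β u = some b)
    (hhigh : ∀ u ∈ Ioc b 1, ∀ v, β u = some v → b < v) :
    ∀ᵐ u ∂(volume.restrict (Icc (0 : ℝ) 1)),
      (u ∈ tieSet β b ↔ u ∈ Ico a b) ∧ (u ∈ loseSet β b ↔ u ∈ Icc b 1) := by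
  filter_upwards [ae_restrict_mem measurableSet_Icc, ae_restrict_of_ae (volume.ae_ne b)]
    with u hu hub
  rcases lt_or_ge u a with hua | hau
  · obtain ⟨v, hv, hvb⟩ := hlow u ⟨hu.1, hua⟩
    simp [tieSet, loseSet, hv, hvb.ne, hvb.le, hua.not_ge, (hua.trans_le hab).not_ge]
  · rcases hub.lt_or_gt with hub | hbu
    · simp [tieSet, loseSet, hpool u ⟨hau, hub⟩, hau, hub, hub.not_ge]
    · have hv := hhigh u ⟨hbu, hu.2⟩
      have hne : β u ≠ some b := fun h ↦ (hv b h).false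
      simpa [tieSet, loseSet, hne, hbu.le, hbu.not_gt, hu.2] using hv

lemma winProb_of_bid_pool (ha : 0 ≤ a) (hab : a ≤ b) (hb : b ≤ 1) (hs : β s = some b)
    (hlow : ∀ u ∈ Ico 0 a, ∃ v, β u = some v ∧ v < b)
    (hpool : ∀ u ∈ Ico a b, β u = some b)
    (hhigh : ∀ u ∈ Ioc b 1, ∀ v, β u = some v → b < v) :
    winProb N β s = ∫ x in (0 : ℝ)..1, ((b - a) * x + (1 - b)) ^ N := by
  set μ : Measure ℝ := volume.restrict (Icc 0 1)
  have tie_lose_iff := ae_mem_tieSet_iff_and_mem_loseSet_iff hab hlow hpool hhigh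
  have tie_ae : tieSet β b =ᵐ[μ] Ico a b := by
    filter_upwards [tie_lose_iff] with u hu using propext hu.1
  have lose_ae : loseSet β b =ᵐ[μ] Icc b 1 := by
    filter_upwards [tie_lose_iff] with u hu using propext hu.2
  have tie_real : μ.real (tieSet β b) = b - a := by
    rw [measureReal_congr tie_ae, measureReal_restrict_apply measurableSet_Ico,
      inter_eq_left.2 (Ico_subset_Icc_self.trans (Icc_subset_Icc ha hb)),
      Real.volume_real_Ico_of_le hab]
  have lose_real : μ.real (loseSet β b) = 1 - b := by
    rw [measureReal_congr lose_ae, measureReal_restrict_apply measurableSet_Icc,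
      inter_eq_left.2 (Icc_subset_Icc_left (ha.trans hab)), Real.volume_real_Icc_of_le hb]
  rw [winProb_of_eq_some hs (measurableSet_Ico.nullMeasurableSet.congr tie_ae.symm)
    (measurableSet_Icc.nullMeasurableSet.congr lose_ae.symm), tie_real, lose_real]

lemma integral_pool_pow_eq_average (N : ℕ) (hab : a ≠ b) :
    ∫ x in (0 : ℝ)..1, ((b - a) * x + (1 - b)) ^ N = (∫ t in a..b, (1 - t) ^ N) / (b - a) := by
  rw [intervalIntegral.integral_comp_mul_add (· ^ N) (sub_ne_zero.2 hab.symm),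
    intervalIntegral.integral_comp_sub_left (· ^ N) 1, smul_eq_mul, inv_mul_eq_div]
  congr 2 <;> ring

end WinProb

/-- `β` is the bidding strategy of the bid-restricted auction with pooling intervals
`[slo i, shi i)` and exclusion cutoff `Sbar`, where `none` means not bidding. Bids on negative
non-pooled quantiles are left unspecified. -/
structure IsBidRestrictedStrategy {ι : Type*} (Sbar : ℝ) (slo shi : ι → ℝ)
    (β : ℝ → Option ℝ) : Prop where
  bid_self : ∀ t ∈ Ico (0 : ℝ) Sbar \ ⋃ i, Ico (slo i) (shi i), β t = some t
  bid_pool : ∀ i, ∀ t ∈ Ico (slo i) (shi i), β t = some (shi i)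
  bid_none : ∀ t, Sbar ≤ t → β t = none

namespace IsBidRestrictedStrategy

variable {ι : Type*} {Sbar : ℝ} {slo shi : ι → ℝ} {β : ℝ → Option ℝ} {s u v : ℝ} {i : ι}

lemma bid_self_or_pool (hβ : IsBidRestrictedStrategy Sbar slo shi β) (hu : u ∈ Ico 0 Sbar) :
    β u = some u ∨ ∃ i, u ∈ Ico (slo i) (shi i) ∧ β u = some (shi i) := by
  by_cases hpool : u ∈ ⋃ i, Ico (slo i) (shi i)
  · obtain ⟨i, hi⟩ := mem_iUnion.1 hpool
    exact .inr ⟨i, hi, hβ.bid_pool i u hi⟩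
  · exact .inl (hβ.bid_self u ⟨hu, hpool⟩)

lemma le_bid (hβ : IsBidRestrictedStrategy Sbar slo shi β) (hu : 0 ≤ u) (hv : β u = some v) :
    u ≤ v := by
  have hu_lt : u < Sbar := by
    by_contra! hge
    simp [hβ.bid_none u hge] at hv
  rcases hβ.bid_self_or_pool ⟨hu, hu_lt⟩ with hself | ⟨i, hi, hpool⟩
  · exact (Option.some.inj (hself.symm.trans hv)).le
  · exact hi.2.le.trans (Option.some.inj (hpool.symm.trans hv)).le

lemma exists_bid_lt_of_lt (hβ : IsBidRestrictedStrategy Sbar slo shi β)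
    (hs : s ∈ Ico (0 : ℝ) Sbar \ ⋃ i, Ico (slo i) (shi i)) (hne : ∀ i, s ≠ shi i)
    (hu : u ∈ Ico 0 s) : ∃ v, β u = some v ∧ v < s := by
  rcases hβ.bid_self_or_pool ⟨hu.1, hu.2.trans hs.1.2⟩ with hself | ⟨i, hi, hpool⟩
  · exact ⟨u, hself, hu.2⟩
  · have shi_le : shi i ≤ s := by
      by_contra! hlt
      exact hs.2 (mem_iUnion.2 ⟨i, hi.1.trans hu.2.le, hlt⟩)
    exact ⟨shi i, hpool, shi_le.lt_of_ne (hne i).symm⟩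

lemma exists_bid_lt_of_lt_pool (hβ : IsBidRestrictedStrategy Sbar slo shi β)
    (hdisj : Pairwise (Function.onFun Disjoint fun i ↦ Ico (slo i) (shi i)))
    (hi : slo i < shi i) (hu : u ∈ Ico 0 (slo i)) : ∃ v, β u = some v ∧ v < shi i := by
  have slo_lt : slo i < Sbar := by
    by_contra! hge
    simpa [hβ.bid_none _ hge] using hβ.bid_pool i _ (left_mem_Ico.2 hi)
  rcases hβ.bid_self_or_pool ⟨hu.1, hu.2.trans slo_lt⟩ with hself | ⟨j, hj, hpool⟩
  · exact ⟨u, hself, hu.2.trans hi⟩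
  · have hij : i ≠ j := by
      rintro rfl
      exact hu.2.not_ge hj.1
    have shi_le : shi j ≤ slo i := by
      by_contra! hlt
      exact disjoint_left.1 (hdisj hij) (left_mem_Ico.2 hi) ⟨hj.1.trans hu.2.le, hlt⟩
    exact ⟨shi j, hpool, shi_le.trans_lt hi⟩

theorem winProb_of_notMem_pool (hβ : IsBidRestrictedStrategy Sbar slo shi β) (hSbar : Sbar ≤ 1)
    (N : ℕ) (hs : s ∈ Ico (0 : ℝ) Sbar \ ⋃ i, Ico (slo i) (shi i)) (hne : ∀ i, s ≠ shi i) :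
    winProb N β s = (1 - s) ^ N := by
  rw [winProb_of_bid_pool hs.1.1 le_rfl (hs.1.2.le.trans hSbar) (hβ.bid_self s hs)
    (fun u hu ↦ hβ.exists_bid_lt_of_lt hs hne hu) (by simp)
    fun u hu v hv ↦ hu.1.trans_le (hβ.le_bid (hs.1.1.trans hu.1.le) hv)]
  simp

theorem winProb_of_mem_pool (hβ : IsBidRestrictedStrategy Sbar slo shi β) (hSbar : Sbar ≤ 1)
    (N : ℕ) (hdisj : Pairwise (Function.onFun Disjoint fun i ↦ Ico (slo i) (shi i)))
    (hsub : ∀ i, Ico (slo i) (shi i) ⊆ Icc 0 Sbar) (hs : s ∈ Ico (slo i) (shi i)) :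
    winProb N β s = (∫ t in slo i..shi i, (1 - t) ^ N) / (shi i - slo i) := by
  have hi : slo i < shi i := hs.1.trans_lt hs.2
  obtain ⟨slo_nonneg, shi_le⟩ : 0 ≤ slo i ∧ shi i ≤ Sbar := by
    rw [← Icc_subset_Icc_iff hi.le, ← closure_Ico hi.ne]
    exact isClosed_Icc.closure_subset_iff.2 (hsub i)
  rw [winProb_of_bid_pool slo_nonneg hi.le (shi_le.trans hSbar) (hβ.bid_pool i s hs)
      (fun u hu ↦ hβ.exists_bid_lt_of_lt_pool hdisj hi hu) (hβ.bid_pool i)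
      fun u hu v hv ↦ hu.1.trans_le (hβ.le_bid (slo_nonneg.trans (hi.trans hu.1).le) hv),
    integral_pool_pow_eq_average N hi.ne]

end IsBidRestrictedStrategy

section Order

variable {γ : Type*} [Preorder γ] {L : ℕ} {a b : Fin L → γ}

lemma right_le_left_of_lt (hle : ∀ i, a i ≤ b i)
    (hord : ∀ i : Fin L, ∀ h : i.val + 1 < L, b i ≤ a ⟨i.val + 1, h⟩) {i j : Fin L}
    (hij : i < j) : b i ≤ a j := by
  obtain ⟨m, hm⟩ := j
  change i.val + 1 ≤ m at hij
  induction m, hij using Nat.le_induction with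
  | base => exact hord i hm
  | succ k _ ih =>
    have hk : k < L := k.lt_succ_self.trans hm
    exact (ih hk).trans ((hle ⟨k, hk⟩).trans (hord ⟨k, hk⟩ hm))

lemma pairwise_disjoint_Ico_of_right_le_left (hle : ∀ i, a i ≤ b i)
    (hord : ∀ i : Fin L, ∀ h : i.val + 1 < L, b i ≤ a ⟨i.val + 1, h⟩) :
    Pairwise (Function.onFun Disjoint fun i ↦ Ico (a i) (b i)) :=
  (pairwise_disjoint_on _).2 fun _ _ hij ↦ disjoint_left.2 fun _ hi hj ↦
    (hi.2.trans_le ((right_le_left_of_lt hle hord hij).trans hj.1)).false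

end Order

theorem stmt_6_general {ι : Type*} (N : ℕ) {slo shi : ι → ℝ} {Sbar : ℝ} (hSbar_le : Sbar ≤ 1)
    (hsub : ∀ i, Ico (slo i) (shi i) ⊆ Icc 0 Sbar)
    (hdisj : Pairwise (Function.onFun Disjoint fun i ↦ Ico (slo i) (shi i)))
    {β : ℝ → Option ℝ} (hβ : IsBidRestrictedStrategy Sbar slo shi β) :
    (∀ s ∈ Ico (0 : ℝ) Sbar \ ⋃ i, Ico (slo i) (shi i), (∀ i, s ≠ shi i) →
        winProb N β s = (1 - s) ^ N) ∧
    (∀ i, ∀ s ∈ Ico (slo i) (shi i),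
        winProb N β s = (∫ t in slo i..shi i, (1 - t) ^ N) / (shi i - slo i)) ∧
    (∀ s, Sbar ≤ s → winProb N β s = 0) :=
  ⟨fun _ hs hne ↦ hβ.winProb_of_notMem_pool hSbar_le N hs hne,
    fun _ _ hs ↦ hβ.winProb_of_mem_pool hSbar_le N hdisj hsub hs,
    fun s hs ↦ winProb_of_eq_none (hβ.bid_none s hs)⟩

/-- Under the bid-restricted-auction strategy (bid one's quantile on
non-pooling intervals, bid `shi i` on the pooling interval `[slo i, shi i)`, abstain
at or above `S̄`), the interim winning probability is `(1−s)^{n−1}` on non-pooling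
quantiles, the average of `(1−t)^{n−1}` over the pooling interval on pooling
quantiles, and `0` above `S̄`. -/
theorem stmt_6 (n : ℕ) (hn : 2 ≤ n) (L : ℕ)
    (slo shi : Fin L → ℝ)
    (Sbar : ℝ) (hSbar_pos : 0 < Sbar) (hSbar_le : Sbar ≤ 1)
    (hle : ∀ i, slo i ≤ shi i)
    (hsub : ∀ i, Ico (slo i) (shi i) ⊆ Icc 0 Sbar)
    (hord : ∀ i : Fin L, ∀ h : i.val + 1 < L, shi i ≤ slo ⟨i.val + 1, h⟩)
    (β : ℝ → Option ℝ)
    (hβ1 : ∀ t ∈ Ico (0:ℝ) Sbar \ ⋃ i, Ico (slo i) (shi i), β t = some t)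
    (hβ2 : ∀ i : Fin L, ∀ t ∈ Ico (slo i) (shi i), β t = some (shi i))
    (hβ3 : ∀ t : ℝ, Sbar ≤ t → β t = none) :
    (∀ s ∈ Ico (0:ℝ) Sbar \ ⋃ i, Ico (slo i) (shi i), (∀ i, s ≠ shi i) →
        winProb (n - 1) β s = (1 - s) ^ (n - 1)) ∧
    (∀ i : Fin L, ∀ s ∈ Ico (slo i) (shi i),
        winProb (n - 1) β s
          = (∫ t in slo i..shi i, (1 - t) ^ (n - 1)) / (shi i - slo i)) ∧
    (∀ s ∈ Icc (0:ℝ) 1, Sbar < s → winProb (n - 1) β s = 0) := by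
  obtain ⟨hself, hpool, hnone⟩ := stmt_6_general (n - 1) hSbar_le hsub
    (pairwise_disjoint_Ico_of_right_le_left hle hord) ⟨hβ1, hβ2, hβ3⟩
  exact ⟨hself, hpool, fun s _ hs ↦ hnone s hs.le⟩
end

section
/- Let n ≥ 2 and let g̃ : [0,1] → ℝ be a bounded measurable nonincreasing function. Set S̄ = sup{ s ∈ [0,1] : g̃(s) ≥ 0 } (with sup ∅ = 0). Then the function P̂(s) = (1−s)^{n−1} for s ≤ S̄ and P̂(s) = 0 for s > S̄ is feasible and maximizes ∫_0^1 g̃(s) P(s) ds over all feasible P. -/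
open MeasureTheory Set

/-- A quantile interim allocation is feasible if it maps `[0,1]` into `[0,1]`, is
nonincreasing, and is weakly majorized by `s ↦ (1−s)^{n−1}` (Border's condition). -/
def Feasible (n : ℕ) (P : ℝ → ℝ) : Prop :=
  (∀ s ∈ Icc (0:ℝ) 1, P s ∈ Icc (0:ℝ) 1) ∧
  AntitoneOn P (Icc (0:ℝ) 1) ∧
  ∀ x ∈ Icc (0:ℝ) 1, (∫ t in (0:ℝ)..x, P t) ≤ ∫ t in (0:ℝ)..x, (1 - t) ^ (n - 1)

/-!
Discarding the negative part of `g` can only increase `∫ g P`, as `P ≥ 0`. The positive part `g⁺` is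
nonnegative and nonincreasing, so it is a mixture of indicators of initial intervals (the layer-cake
formula), and the majorization constraint on those intervals gives `∫ g⁺ P ≤ ∫ g⁺ Q`, where
`Q s = (1 - s) ^ (n - 1)`. Away from the cutoff `g⁺ Q` coincides with `g P̂`.
-/

section SuperlevelSets

variable {X : Type*} [MeasurableSpace X] {μ : Measure X} {f h : X → ℝ}

lemma integral_nonneg_iff_lintegral_ofReal_neg_le (hf : Integrable f μ) :
    0 ≤ ∫ x, f x ∂μ ↔
      ∫⁻ x, ENNReal.ofReal (-f x) ∂μ ≤ ∫⁻ x, ENNReal.ofReal (f x) ∂μ := by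
  rw [integral_eq_lintegral_pos_part_sub_lintegral_neg_part hf, sub_nonneg]
  exact ENNReal.toReal_le_toReal hf.neg.lintegral_lt_top.ne hf.lintegral_lt_top.ne

-- The layer-cake formula for the measure with density `f⁺`, since `ENNReal.ofReal` truncates.
lemma lintegral_ofReal_mul_eq_lintegral_superlevel (hf : AEMeasurable f μ)
    (hh : AEMeasurable h μ) (h_nonneg : 0 ≤ᵐ[μ] h) :
    ∫⁻ x, ENNReal.ofReal (h x * f x) ∂μ =
      ∫⁻ t in Ioi (0 : ℝ), ∫⁻ x in {x | t < h x}, ENNReal.ofReal (f x) ∂μ := by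
  have hac := withDensity_absolutelyContinuous μ fun x ↦ ENNReal.ofReal (f x)
  calc ∫⁻ x, ENNReal.ofReal (h x * f x) ∂μ
      = ∫⁻ x, ENNReal.ofReal (f x) * ENNReal.ofReal (h x) ∂μ := by
        refine lintegral_congr_ae ?_
        filter_upwards [h_nonneg] with x hx
        rw [ENNReal.ofReal_mul hx, mul_comm]
    _ = ∫⁻ x, ENNReal.ofReal (h x) ∂μ.withDensity fun x ↦ ENNReal.ofReal (f x) :=
        (lintegral_withDensity_eq_lintegral_mul₀ hf.ennreal_ofReal hh.ennreal_ofReal).symm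
    _ = ∫⁻ t in Ioi (0 : ℝ), ∫⁻ x in {x | t < h x}, ENNReal.ofReal (f x) ∂μ := by
        rw [lintegral_eq_lintegral_meas_lt _ (hac.ae_le h_nonneg) (hh.mono_ac hac)]
        exact lintegral_congr fun t ↦
          withDensity_apply₀ _ (nullMeasurableSet_lt aemeasurable_const hh)

lemma integral_mul_nonneg_of_setIntegral_superlevel_nonneg (hf : Integrable f μ)
    (hh : AEMeasurable h μ) (h_nonneg : 0 ≤ᵐ[μ] h) (hhf : Integrable (fun x ↦ h x * f x) μ)
    (hsuper : ∀ t > 0, 0 ≤ ∫ x in {x | t < h x}, f x ∂μ) :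
    0 ≤ ∫ x, h x * f x ∂μ := by
  rw [integral_nonneg_iff_lintegral_ofReal_neg_le hhf]
  simp only [← mul_neg]
  rw [lintegral_ofReal_mul_eq_lintegral_superlevel hf.aemeasurable.fun_neg hh h_nonneg,
    lintegral_ofReal_mul_eq_lintegral_superlevel hf.aemeasurable hh h_nonneg]
  exact setLIntegral_mono' measurableSet_Ioi fun t ht ↦
    (integral_nonneg_iff_lintegral_ofReal_neg_le hf.integrableOn).1 (hsuper t ht)

end SuperlevelSets

lemma exists_ae_eq_Ioc_of_Ioc_subset {α : Type*} [ConditionallyCompleteLinearOrder α]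
    [MeasurableSpace α] {μ : Measure α} [NullSingletonClass μ] {a b : α} {A : Set α} (hab : a ≤ b)
    (hA : A ⊆ Ioc a b) (hdown : ∀ s ∈ A, Ioc a s ⊆ A) :
    ∃ x ∈ Icc a b, A =ᵐ[μ] Ioc a x := by
  rcases A.eq_empty_or_nonempty with rfl | ⟨s, hs⟩
  · exact ⟨a, left_mem_Icc.2 hab, .of_eq (Ioc_self a).symm⟩
  have hbdd : BddAbove A := bddAbove_Ioc.mono hA
  have hlower : Ioo a (sSup A) ⊆ A := fun t ht ↦
    let ⟨u, hu, htu⟩ := exists_lt_of_lt_csSup ⟨s, hs⟩ ht.2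
    hdown u hu ⟨ht.1, htu.le⟩
  have hupper : A ⊆ Ioc a (sSup A) := fun t ht ↦ ⟨(hA ht).1, le_csSup hbdd ht⟩
  exact ⟨sSup A, ⟨(hupper hs).1.le.trans (hupper hs).2, csSup_le ⟨s, hs⟩ fun t ht ↦ (hA ht).2⟩,
    hupper.eventuallyLE.antisymm (Ioo_ae_eq_Ioc.symm.le.trans hlower.eventuallyLE)⟩

section Interval

variable {a b c : ℝ} {f g h P Q : ℝ → ℝ}

lemma intervalIntegrable_mul_of_antitoneOn (hh : AntitoneOn h (uIcc a b))
    (hf : IntervalIntegrable f volume a b) :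
    IntervalIntegrable (fun s ↦ h s * f s) volume a b := by
  rw [intervalIntegrable_iff] at hf ⊢
  exact hf.mul_of_top_right ((hh.memLp_isCompact isCompact_uIcc).mono_measure
    (Measure.restrict_mono uIoc_subset_uIcc le_rfl))

lemma intervalIntegral_mul_nonneg_of_antitoneOn (hab : a ≤ b)
    (hf : IntervalIntegrable f volume a b) (hh : AntitoneOn h (Icc a b)) (hb : 0 ≤ h b)
    (hprim : ∀ x ∈ Icc a b, 0 ≤ ∫ t in a..x, f t) :
    0 ≤ ∫ s in a..b, h s * f s := by
  have hhf := intervalIntegrable_mul_of_antitoneOn (by rwa [uIcc_of_le hab]) hf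
  rw [intervalIntegrable_iff_integrableOn_Ioc_of_le hab] at hf hhf
  rw [intervalIntegral.integral_of_le hab]
  have hh' : AntitoneOn h (Ioc a b) := hh.mono Ioc_subset_Icc_self
  have hmeas := aemeasurable_restrict_of_antitoneOn (μ := volume) measurableSet_Ioc hh'
  refine integral_mul_nonneg_of_setIntegral_superlevel_nonneg hf hmeas
    (ae_restrict_of_forall_mem measurableSet_Ioc fun s hs ↦
      hb.trans (hh (Ioc_subset_Icc_self hs) (right_mem_Icc.2 hab) hs.2)) hhf fun t _ ↦ ?_
  obtain ⟨x, hx, hAx⟩ := exists_ae_eq_Ioc_of_Ioc_subset (μ := volume)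
    (A := {s | t < h s} ∩ Ioc a b) hab inter_subset_right fun s hs u hu ↦
      have hu' : u ∈ Ioc a b := ⟨hu.1, hu.2.trans hs.2.2⟩
      ⟨hs.1.trans_le (hh' hu' hs.2 hu.2), hu'⟩
  rw [Measure.restrict_restrict₀ (nullMeasurableSet_lt aemeasurable_const hmeas),
    setIntegral_congr_set hAx, ← intervalIntegral.integral_of_le hx.1]
  exact hprim x hx

lemma intervalIntegral_mul_le_of_antitoneOn (hab : a ≤ b)
    (hP : IntervalIntegrable P volume a b) (hQ : IntervalIntegrable Q volume a b)
    (hh : AntitoneOn h (Icc a b)) (hb : 0 ≤ h b)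
    (hPQ : ∀ x ∈ Icc a b, ∫ t in a..x, P t ≤ ∫ t in a..x, Q t) :
    ∫ s in a..b, h s * P s ≤ ∫ s in a..b, h s * Q s := by
  have hh' : AntitoneOn h (uIcc a b) := by rwa [uIcc_of_le hab]
  rw [← sub_nonneg, ← intervalIntegral.integral_sub (intervalIntegrable_mul_of_antitoneOn hh' hQ)
    (intervalIntegrable_mul_of_antitoneOn hh' hP)]
  simp only [← mul_sub]
  refine intervalIntegral_mul_nonneg_of_antitoneOn hab (hQ.sub hP) hh hb fun x hx ↦ ?_
  have hsub : uIcc a x ⊆ uIcc a b := uIcc_subset_uIcc_left (Icc_subset_uIcc hx)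
  rw [intervalIntegral.integral_sub (hQ.mono_set hsub) (hP.mono_set hsub), sub_nonneg]
  exact hPQ x hx

lemma intervalIntegral_mul_le_mul_indicator_Iic (hab : a ≤ b)
    (hP : IntervalIntegrable P volume a b) (hQ : IntervalIntegrable Q volume a b)
    (hP_nonneg : ∀ s ∈ Icc a b, 0 ≤ P s)
    (hPQ : ∀ x ∈ Icc a b, ∫ t in a..x, P t ≤ ∫ t in a..x, Q t)
    (hg : AntitoneOn g (Icc a b)) (hg_nonneg : ∀ s ∈ Icc a b, s < c → 0 ≤ g s)
    (hg_nonpos : ∀ s ∈ Icc a b, c < s → g s ≤ 0) :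
    ∫ s in a..b, g s * P s ≤ ∫ s in a..b, g s * (Iic c).indicator Q s := by
  have hpos : AntitoneOn (fun s ↦ max (g s) 0) (Icc a b) := hg.max antitoneOn_const
  calc ∫ s in a..b, g s * P s ≤ ∫ s in a..b, max (g s) 0 * P s := by
        rw [← uIcc_of_le hab] at hg hpos
        exact intervalIntegral.integral_mono_on hab (intervalIntegrable_mul_of_antitoneOn hg hP)
          (intervalIntegrable_mul_of_antitoneOn hpos hP) fun s hs ↦
            mul_le_mul_of_nonneg_right (le_max_left _ _) (hP_nonneg s hs)
    _ ≤ ∫ s in a..b, max (g s) 0 * Q s :=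
        intervalIntegral_mul_le_of_antitoneOn hab hP hQ hpos (le_max_right _ _) hPQ
    _ = ∫ s in a..b, g s * (Iic c).indicator Q s := by
        refine intervalIntegral.integral_congr_ae ?_
        filter_upwards [Measure.ae_ne volume c] with s hsc hs
        have hs' : s ∈ Icc a b := Ioc_subset_Icc_self (uIoc_of_le hab ▸ hs)
        rcases hsc.lt_or_gt with hlt | hgt
        · rw [max_eq_left (hg_nonneg s hs' hlt), indicator_of_mem (mem_Iic.2 hlt.le)]
        · rw [max_eq_right (hg_nonpos s hs' hgt), indicator_of_notMem (notMem_Iic.2 hgt),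
            zero_mul, mul_zero]

end Interval

section Cutoff

variable {g : ℝ → ℝ} {D : Set ℝ} {s : ℝ}

lemma nonneg_of_lt_sSup_nonneg (hg : AntitoneOn g D) (hs : s ∈ D) (hs0 : 0 ≤ s)
    (hlt : s < sSup {x ∈ D | 0 ≤ g x}) : 0 ≤ g s := by
  -- `0 ≤ s` excludes the convention `sSup ∅ = 0`.
  have hne : {x ∈ D | 0 ≤ g x}.Nonempty := by
    by_contra! hempty
    rw [hempty, Real.sSup_empty] at hlt
    exact hs0.not_gt hlt
  obtain ⟨x, ⟨hxD, hgx⟩, hsx⟩ := exists_lt_of_lt_csSup hne hlt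
  exact hgx.trans (hg hs hxD hsx.le)

lemma neg_of_sSup_nonneg_lt (hD : BddAbove D) (hs : s ∈ D)
    (hlt : sSup {x ∈ D | 0 ≤ g x} < s) : g s < 0 := by
  by_contra! hgs
  exact notMem_of_csSup_lt hlt (hD.mono (sep_subset _ _)) ⟨hs, hgs⟩

end Cutoff

lemma antitoneOn_indicator_Iic {α β : Type*} [LinearOrder α] [Preorder β] [Zero β] {f : α → β}
    {D : Set α} {c : α} (hf : AntitoneOn f D) (hf_nonneg : ∀ s ∈ D, 0 ≤ f s) :
    AntitoneOn ((Iic c).indicator f) D := by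
  intro s hs t ht hst
  by_cases htc : t ∈ Iic c
  · rw [indicator_of_mem htc, indicator_of_mem (mem_Iic.2 (hst.trans htc))]
    exact hf hs ht hst
  · rw [indicator_of_notMem htc]
    exact indicator_apply_nonneg fun _ ↦ hf_nonneg s hs

section Feasible

variable {n : ℕ} {P P' : ℝ → ℝ}

lemma Feasible.intervalIntegrable (hP : Feasible n P) : IntervalIntegrable P volume 0 1 :=
  AntitoneOn.intervalIntegrable (by rw [uIcc_of_le zero_le_one]; exact hP.2.1)

lemma Feasible.congr (hP : Feasible n P) (h : EqOn P P' (Icc 0 1)) : Feasible n P' := by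
  refine ⟨fun s hs ↦ h hs ▸ hP.1 s hs, hP.2.1.congr h, fun x hx ↦ ?_⟩
  have hint : ∫ t in (0 : ℝ)..x, P t = ∫ t in (0 : ℝ)..x, P' t :=
    intervalIntegral.integral_congr
      (h.mono (uIcc_subset_Icc (left_mem_Icc.2 zero_le_one) hx))
  exact hint ▸ hP.2.2 x hx

lemma feasible_of_antitoneOn_of_le (hP : AntitoneOn P (Icc 0 1))
    (hP_nonneg : ∀ s ∈ Icc (0 : ℝ) 1, 0 ≤ P s)
    (hP_le : ∀ s ∈ Icc (0 : ℝ) 1, P s ≤ (1 - s) ^ (n - 1)) : Feasible n P := by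
  refine ⟨fun s hs ↦ ⟨hP_nonneg s hs, (hP_le s hs).trans
    (pow_le_one₀ (sub_nonneg.2 hs.2) (sub_le_self 1 hs.1))⟩, hP, fun x hx ↦ ?_⟩
  have hsub : Icc 0 x ⊆ Icc (0 : ℝ) 1 := Icc_subset_Icc_right hx.2
  refine intervalIntegral.integral_mono_on hx.1 (AntitoneOn.intervalIntegrable ?_)
    (Continuous.intervalIntegrable (by fun_prop) _ _) fun s hs ↦ hP_le s (hsub hs)
  rw [uIcc_of_le hx.1]
  exact hP.mono hsub

lemma feasible_indicator_Iic (n : ℕ) (c : ℝ) :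
    Feasible n ((Iic c).indicator fun s ↦ (1 - s) ^ (n - 1)) := by
  have hQ_nonneg : ∀ s ∈ Icc (0 : ℝ) 1, 0 ≤ (1 - s) ^ (n - 1) := fun s hs ↦
    pow_nonneg (sub_nonneg.2 hs.2) _
  have hQ : AntitoneOn (fun s : ℝ ↦ (1 - s) ^ (n - 1)) (Icc 0 1) := fun s _ t ht hst ↦
    pow_le_pow_left₀ (sub_nonneg.2 ht.2) (sub_le_sub_left hst 1) _
  exact feasible_of_antitoneOn_of_le (antitoneOn_indicator_Iic hQ hQ_nonneg)
    (fun s hs ↦ indicator_apply_nonneg fun _ ↦ hQ_nonneg s hs)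
    fun s hs ↦ indicator_apply_le' (fun _ ↦ le_rfl) fun _ ↦ hQ_nonneg s hs

end Feasible

/-- If the quantile virtual surplus `g̃` is nonincreasing, then the
cutoff allocation `P̂(s) = (1−s)^{n−1}` for `s ≤ S̄` (where `S̄ = sup{s : g̃(s) ≥ 0}`,
with `sup ∅ = 0`) and `P̂(s) = 0` for `s > S̄` is feasible and maximizes `∫₀¹ g̃ P`. -/
theorem stmt_7 (n : ℕ) (hn : 2 ≤ n)
    (gt : ℝ → ℝ) (hgt_meas : Measurable gt)
    (hgt_bdd : ∃ C, ∀ s ∈ Icc (0:ℝ) 1, |gt s| ≤ C)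
    (hgt_anti : AntitoneOn gt (Icc (0:ℝ) 1))
    (Sbar : ℝ) (hSbar : Sbar = sSup {s ∈ Icc (0:ℝ) 1 | 0 ≤ gt s})
    (Phat : ℝ → ℝ)
    (hPhat1 : ∀ s ∈ Icc (0:ℝ) 1, s ≤ Sbar → Phat s = (1 - s) ^ (n - 1))
    (hPhat2 : ∀ s ∈ Icc (0:ℝ) 1, Sbar < s → Phat s = 0) :
    Feasible n Phat ∧
      ∀ P : ℝ → ℝ, Feasible n P →
        (∫ s in (0:ℝ)..1, gt s * P s) ≤ ∫ s in (0:ℝ)..1, gt s * Phat s := by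
  have hPhat : EqOn ((Iic Sbar).indicator fun s ↦ (1 - s) ^ (n - 1)) Phat (Icc 0 1) := by
    intro s hs
    rcases le_or_gt s Sbar with hle | hgt
    · rw [indicator_of_mem (mem_Iic.2 hle), hPhat1 s hs hle]
    · rw [indicator_of_notMem (notMem_Iic.2 hgt), hPhat2 s hs hgt]
  refine ⟨(feasible_indicator_Iic n Sbar).congr hPhat, fun P hP ↦ ?_⟩
  calc ∫ s in (0 : ℝ)..1, gt s * P s
      ≤ ∫ s in (0 : ℝ)..1, gt s * (Iic Sbar).indicator (fun s ↦ (1 - s) ^ (n - 1)) s :=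
        intervalIntegral_mul_le_mul_indicator_Iic zero_le_one hP.intervalIntegrable
          (Continuous.intervalIntegrable (by fun_prop) _ _) (fun s hs ↦ (hP.1 s hs).1) hP.2.2
          hgt_anti (fun s hs hlt ↦ nonneg_of_lt_sSup_nonneg hgt_anti hs hs.1 (hSbar ▸ hlt))
          fun s hs hlt ↦ (neg_of_sSup_nonneg_lt bddAbove_Icc hs (hSbar ▸ hlt)).le
    _ = ∫ s in (0 : ℝ)..1, gt s * Phat s :=
        intervalIntegral.integral_congr fun s hs ↦
          congrArg (gt s * ·) (hPhat (uIcc_of_le (zero_le_one' ℝ) ▸ hs))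
end

section
/- Let n ≥ 2 and let g̃ : [0,1] → ℝ be a bounded measurable nondecreasing function with ∫_0^1 g̃(s) ds ≥ 0. Then the constant function P̂ ≡ 1/n is feasible and maximizes ∫_0^1 g̃(s) P(s) ds over all feasible P. -/
open MeasureTheory Set

/-!
By Chebyshev's integral inequality, a nondecreasing `g` and a nonincreasing `P` on `[0, 1]` satisfy
`∫ g P ≤ (∫ g) (∫ P)`. Border's condition at `x = 1` gives `∫ P ≤ 1 / n`, and `0 ≤ ∫ g` turns this
into `∫ g P ≤ (∫ g) / n`, the value of the constant allocation `1 / n`. That allocation is feasible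
because `∫₀ˣ (1 - t) ^ (n - 1) dt = (1 - (1 - x) ^ n) / n` is at least `x / n`.
-/

section Chebyshev

variable {α : Type*} [MeasurableSpace α] {μ : Measure α} {f g : α → ℝ} {s : Set α}

theorem measureReal_mul_setIntegral_mul_le_of_antivaryOn (hfg : AntivaryOn f g s)
    (hs : MeasurableSet s) (hμs : μ s ≠ ⊤) (hf : IntegrableOn f s μ) (hg : IntegrableOn g s μ)
    (hmul : IntegrableOn (fun x => f x * g x) s μ) :
    μ.real s * ∫ x in s, f x * g x ∂μ ≤ (∫ x in s, f x ∂μ) * ∫ x in s, g x ∂μ := by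
  have : IsFiniteMeasure (μ.restrict s) := ⟨by simpa using hμs.lt_top⟩
  set ν := μ.restrict s
  have rearrangement : ∀ᵐ z ∂ν.prod ν,
      f z.1 * g z.1 + f z.2 * g z.2 ≤ f z.1 * g z.2 + g z.1 * f z.2 := by
    have hmem : ∀ᵐ x ∂ν, x ∈ s := ae_restrict_mem hs
    filter_upwards [Measure.quasiMeasurePreserving_fst.ae hmem,
      Measure.quasiMeasurePreserving_snd.ae hmem] with z h₁ h₂
    simpa only [mul_comm (g z.1)] using hfg.mul_add_mul_le_mul_add_mul h₁ h₂
  have integrated := integral_mono_ae ((hmul.comp_fst ν).add (hmul.comp_snd ν))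
    ((hf.mul_prod hg).add (hg.mul_prod hf)) rearrangement
  rw [integral_add' (hmul.comp_fst ν) (hmul.comp_snd ν),
    integral_add' (hf.mul_prod hg) (hg.mul_prod hf), integral_prod_mul, integral_prod_mul,
    integral_fun_fst (fun x => f x * g x), integral_fun_snd (fun x => f x * g x),
    measureReal_restrict_apply_univ, smul_eq_mul] at integrated
  linarith

theorem measureReal_mul_setIntegral_mul_le_of_monotoneOn_of_antitoneOn
    [ConditionallyCompleteLinearOrder α] [TopologicalSpace α] [OrderTopology α] [BorelSpace α]
    [IsFiniteMeasureOnCompacts μ] (hs : IsCompact s) (hf : MonotoneOn f s)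
    (hg : AntitoneOn g s) :
    μ.real s * ∫ x in s, f x * g x ∂μ ≤ (∫ x in s, f x ∂μ) * ∫ x in s, g x ∂μ :=
  measureReal_mul_setIntegral_mul_le_of_antivaryOn (hf.antivaryOn hg) hs.measurableSet
    hs.measure_ne_top (hf.integrableOn_isCompact hs) (hg.integrableOn_isCompact hs)
    ((hf.memLp_isCompact (p := 2) hs).integrable_mul (hg.memLp_isCompact (p := 2) hs))

end Chebyshev

theorem sub_mul_intervalIntegral_mul_le_of_monotoneOn_of_antitoneOn {f g : ℝ → ℝ} {a b : ℝ}
    (hab : a ≤ b) (hf : MonotoneOn f (Icc a b)) (hg : AntitoneOn g (Icc a b)) :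
    (b - a) * ∫ x in a..b, f x * g x ≤ (∫ x in a..b, f x) * ∫ x in a..b, g x := by
  simpa only [intervalIntegral.integral_of_le hab, ← integral_Icc_eq_integral_Ioc,
    Real.volume_real_Icc_of_le hab] using
    measureReal_mul_setIntegral_mul_le_of_monotoneOn_of_antitoneOn (μ := volume) isCompact_Icc
      hf hg

theorem integral_const_sub_pow_pred (a b c : ℝ) {n : ℕ} (hn : n ≠ 0) :
    ∫ t in a..b, (c - t) ^ (n - 1) = ((c - a) ^ n - (c - b) ^ n) / n := by
  obtain ⟨k, rfl⟩ := Nat.exists_eq_succ_of_ne_zero hn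
  simp [intervalIntegral.integral_comp_sub_left (fun t : ℝ => t ^ k)]

theorem div_le_integral_one_sub_pow_pred {n : ℕ} (hn : n ≠ 0) {x : ℝ} (hx : x ∈ Icc (0 : ℝ) 1) :
    x / n ≤ ∫ t in (0 : ℝ)..x, (1 - t) ^ (n - 1) := by
  have hpow : (1 - x) ^ n ≤ 1 - x :=
    pow_le_of_le_one (sub_nonneg.2 hx.2) (sub_le_self _ hx.1) hn
  rw [integral_const_sub_pow_pred _ _ _ hn, sub_zero, one_pow]
  gcongr
  linarith

theorem feasible_const {n : ℕ} (hn : n ≠ 0) {c : ℝ} (hc : c ∈ Icc 0 (1 / (n : ℝ))) :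
    Feasible n (fun _ => c) := by
  refine ⟨fun _ _ => ⟨hc.1, hc.2.trans ?_⟩, antitoneOn_const, fun x hx => ?_⟩
  · exact (one_div (n : ℝ)).trans_le (Nat.cast_inv_le_one n)
  · calc ∫ _ in (0 : ℝ)..x, c = x * c := by simp
      _ ≤ x * (1 / n) := mul_le_mul_of_nonneg_left hc.2 hx.1
      _ = x / n := mul_one_div x _
      _ ≤ ∫ t in (0 : ℝ)..x, (1 - t) ^ (n - 1) := div_le_integral_one_sub_pow_pred hn hx

theorem Feasible.integral_le_one_div {n : ℕ} (hn : n ≠ 0) {P : ℝ → ℝ} (hP : Feasible n P) :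
    ∫ t in (0 : ℝ)..1, P t ≤ 1 / n := by
  simpa [integral_const_sub_pow_pred _ _ _ hn, hn] using hP.2.2 1 (right_mem_Icc.2 zero_le_one)

/-- If the quantile virtual surplus `g̃` is nondecreasing with
`∫₀¹ g̃ ≥ 0`, then the random-allocation rule `P̂ ≡ 1/n` is feasible and maximizes
`∫₀¹ g̃ P` over all feasible `P`. -/
theorem stmt_8 (n : ℕ) (hn : 2 ≤ n)
    (gt : ℝ → ℝ) (hgt_meas : Measurable gt)
    (hgt_bdd : ∃ C, ∀ s ∈ Icc (0:ℝ) 1, |gt s| ≤ C)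
    (hgt_mono : MonotoneOn gt (Icc (0:ℝ) 1))
    (hgt_int : 0 ≤ ∫ s in (0:ℝ)..1, gt s) :
    Feasible n (fun _ => 1 / (n : ℝ)) ∧
      ∀ P : ℝ → ℝ, Feasible n P →
        (∫ s in (0:ℝ)..1, gt s * P s) ≤ ∫ s in (0:ℝ)..1, gt s * (1 / (n : ℝ)) := by
  have hn₀ : n ≠ 0 := by omega
  refine ⟨feasible_const hn₀ ⟨by positivity, le_rfl⟩, fun P hP => ?_⟩
  calc ∫ s in (0 : ℝ)..1, gt s * P s
      ≤ (∫ s in (0 : ℝ)..1, gt s) * ∫ s in (0 : ℝ)..1, P s := by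
        simpa using
          sub_mul_intervalIntegral_mul_le_of_monotoneOn_of_antitoneOn zero_le_one hgt_mono hP.2.1
    _ ≤ (∫ s in (0 : ℝ)..1, gt s) * (1 / n) :=
        mul_le_mul_of_nonneg_left (hP.integral_le_one_div hn₀) hgt_int
    _ = ∫ s in (0 : ℝ)..1, gt s * (1 / (n : ℝ)) := (intervalIntegral.integral_mul_const _ _).symm
end

section
/- Let n ≥ 2 and let g̃ : [0,1] → ℝ be a bounded measurable single-dipped function, i.e., there exists m ∈ [0,1] such that g̃ is nonincreasing on [0,m] and nondecreasing on [m,1]. Then there exist 0 ≤ a ≤ S ≤ 1 such that the function P̂ defined by P̂(s) = (1−s)^{n−1} for s ∈ [0,a), P̂(s) = (1/(S−a))∫_a^S (1−t)^{n−1} dt for s ∈ [a, S] (this case being vacuous if a = S), and P̂(s) = 0 for s ∈ (S, 1], is feasible and maximizes ∫_0^1 g̃(s) P(s) ds over all feasible P. -/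
open MeasureTheory Set

/-!
Let `G` be a primitive of `g` and let `𝒢` be its least nondecreasing concave
majorant. Since `g` is single-dipped, `G` is concave on `[l, m]` and convex on `[m, u]`, so `𝒢`
follows `G` up to a point `a ≤ m` and is affine afterwards, with a slope `c ≥ 0`; either `c = 0`, or
`𝒢` meets `G` again at `u`. For nonnegative nonincreasing `P`, two applications of Abel's inequality
give `∫ g P ≤ ∫ 𝒢' P ≤ ∫ 𝒢' Q`, the first because `G ≤ 𝒢` and the second because `P` is majorized by
`Q` and `𝒢'` is itself nonnegative and nonincreasing. Both are equalities for the allocation that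
follows `Q` up to `a` and is constant on `(a, u]`: equal to `0` if `c = 0`, so that `S = a`, and to
the average of `Q` otherwise, so that `S = u`.
-/

section AbelInequality

variable {μ : Measure ℝ} [NullSingletonClass μ] {f P : ℝ → ℝ} {a b : ℝ}

lemma exists_inter_Ioc_ae_eq_Ioc_of_isLowerSet {s : Set ℝ} (hs : IsLowerSet s) (hab : a ≤ b) :
    ∃ x ∈ Icc a b, (Ioc a b ∩ s : Set ℝ) =ᵐ[μ] Ioc a x := by
  set A : Set ℝ := insert a (Ioc a b ∩ s)
  have hA_le : ∀ y ∈ A, y ≤ b := by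
    rintro y (rfl | hy)
    exacts [hab, hy.1.2]
  have hA_bdd : BddAbove A := ⟨b, hA_le⟩
  have hA_ne : A.Nonempty := insert_nonempty _ _
  refine ⟨sSup A, ⟨le_csSup hA_bdd (mem_insert _ _), csSup_le hA_ne hA_le⟩, ?_⟩
  have h_sub : Ioc a b ∩ s ⊆ Ioc a (sSup A) := fun y hy =>
    ⟨hy.1.1, le_csSup hA_bdd (mem_insert_of_mem _ hy)⟩
  have h_sup : Ioo a (sSup A) ⊆ Ioc a b ∩ s := by
    rintro y ⟨hay, hy⟩
    obtain ⟨z, rfl | ⟨hzb, hzs⟩, hyz⟩ := exists_lt_of_lt_csSup hA_ne hy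
    · exact absurd hyz hay.not_gt
    · exact ⟨⟨hay, hyz.le.trans hzb.2⟩, hs hyz.le hzs⟩
  exact h_sub.eventuallyLE.antisymm (Ioo_ae_eq_Ioc.symm.le.trans h_sup.eventuallyLE)

lemma setIntegral_inter_nonpos_of_isLowerSet {s : Set ℝ} (hs : IsLowerSet s) (hab : a ≤ b)
    (hf : ∀ x ∈ Icc a b, ∫ t in a..x, f t ∂μ ≤ 0) : ∫ t in Ioc a b ∩ s, f t ∂μ ≤ 0 := by
  obtain ⟨x, hx, hsx⟩ := exists_inter_Ioc_ae_eq_Ioc_of_isLowerSet (μ := μ) hs hab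
  rw [setIntegral_congr_set hsx, ← intervalIntegral.integral_of_le hx.1]
  exact hf x hx

lemma setIntegral_Ioc_indicator_Iio_one {p M : ℝ} (hp : 0 ≤ p) (hpM : p ≤ M) :
    ∫ t in Ioc 0 M, (Iio p).indicator 1 t = p := by
  have h_inter : Ioc 0 M ∩ Iio p = Ioo 0 p := by
    ext t
    simp only [mem_inter_iff, mem_Ioc, mem_Iio, mem_Ioo]
    exact ⟨fun h => ⟨h.1.1, h.2⟩, fun h => ⟨⟨h.1, h.2.le.trans hpM⟩, h.2⟩⟩
  rw [setIntegral_indicator measurableSet_Iio, h_inter]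
  simp [hp]

-- Layer cake: write `P` as the superposition of the indicators of its superlevel sets `{t < P}`,
-- which are initial segments, and exchange the integrals.
theorem integral_mul_nonpos_of_antitoneOn [SFinite μ] (hab : a ≤ b)
    (hf : IntervalIntegrable f μ a b) (hP : AntitoneOn P (Icc a b)) (hPb : 0 ≤ P b)
    (hle : ∀ x ∈ Icc a b, ∫ t in a..x, f t ∂μ ≤ 0) : ∫ t in a..b, f t * P t ∂μ ≤ 0 := by
  have ha : a ∈ Icc a b := left_mem_Icc.2 hab
  have hb : b ∈ Icc a b := right_mem_Icc.2 hab
  obtain ⟨R, hR, hPR⟩ := hP.exists_antitone_extension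
    (hP.map_bddAbove subset_rfl ⟨b, fun _ h => h.2, hb⟩)
    (hP.map_bddBelow subset_rfl ⟨a, fun _ h => h.1, ha⟩)
  set U : Set (ℝ × ℝ) := {z | z.2 < R z.1} with hU
  have h_layer : ∀ s ∈ Ioc a b,
      f s * P s = ∫ t in Ioc 0 (P a), U.indicator (fun z => f z.1) (s, t) := by
    intro s hs
    have hs' := Ioc_subset_Icc_self hs
    rw [← setIntegral_Ioc_indicator_Iio_one (hPb.trans (hP hs' hb hs.2)) (hP ha hs' hs.1.le),
      ← integral_const_mul, hPR hs']
    simp only [hU, indicator_apply, mem_Iio, mem_ofPred_eq, Pi.one_apply, mul_ite, mul_one,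
      mul_zero]
  have h_int : Integrable (U.indicator fun z => f z.1)
      ((μ.restrict (Ioc a b)).prod (volume.restrict (Ioc 0 (P a)))) :=
    (hf.1.comp_fst _).indicator
      (measurableSet_lt measurable_snd (hR.measurable.comp measurable_fst))
  rw [intervalIntegral.integral_of_le hab, setIntegral_congr_fun measurableSet_Ioc h_layer,
    integral_integral_swap (f := fun s t => U.indicator (fun z => f z.1) (s, t)) h_int]
  refine integral_nonpos fun t => ?_
  calc ∫ s in Ioc a b, U.indicator (fun z => f z.1) (s, t) ∂μ
      = ∫ s in Ioc a b, {s | t < R s}.indicator f s ∂μ := rfl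
    _ = ∫ s in Ioc a b ∩ {s | t < R s}, f s ∂μ :=
        setIntegral_indicator (measurableSet_lt measurable_const hR.measurable)
    _ ≤ 0 := setIntegral_inter_nonpos_of_isLowerSet
        (fun _ _ hyx (hx : t < R _) => hx.trans_le (hR hyx)) hab hle

end AbelInequality

section MonotoneIntegrals

variable {f P : ℝ → ℝ} {a b l m u x y : ℝ}

lemma intervalIntegrable_of_mem_Icc (hf : IntervalIntegrable f volume l u)
    (hx : x ∈ Icc l u) (hy : y ∈ Icc l u) : IntervalIntegrable f volume x y :=
  hf.mono_set (uIcc_subset_uIcc (Icc_subset_uIcc hx) (Icc_subset_uIcc hy))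

lemma integral_eq_sub_of_mem_Icc (hf : IntervalIntegrable f volume l u) (hx : x ∈ Icc l u)
    (hy : y ∈ Icc l u) : ∫ t in x..y, f t = (∫ t in x..u, f t) - ∫ t in y..u, f t :=
  eq_sub_of_add_eq <| intervalIntegral.integral_add_adjacent_intervals
    (intervalIntegrable_of_mem_Icc hf hx hy)
    (intervalIntegrable_of_mem_Icc hf hy (right_mem_Icc.2 (hx.1.trans hx.2)))

lemma continuousOn_integral_left (hf : IntervalIntegrable f volume l u) :
    ContinuousOn (fun x => ∫ t in x..u, f t) (Icc l u) :=
  (intervalIntegral.continuousOn_primitive_interval_left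
    ((intervalIntegrable_iff' (by simp)).1 hf)).mono Icc_subset_uIcc

lemma intervalIntegrable_of_antitoneOn (hab : a ≤ b) (hf : AntitoneOn f (Icc a b)) :
    IntervalIntegrable f volume a b :=
  AntitoneOn.intervalIntegrable (by rwa [uIcc_of_le hab])

lemma intervalIntegrable_of_antitoneOn_of_monotoneOn (hm : m ∈ Icc l u)
    (hanti : AntitoneOn f (Icc l m)) (hmono : MonotoneOn f (Icc m u)) :
    IntervalIntegrable f volume l u :=
  (intervalIntegrable_of_antitoneOn hm.1 hanti).trans
    (MonotoneOn.intervalIntegrable (by rwa [uIcc_of_le hm.2]))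

lemma intervalIntegrable_mul_antitoneOn (hab : a ≤ b) (hf : IntervalIntegrable f volume a b)
    (hP : AntitoneOn P (Icc a b)) : IntervalIntegrable (fun t => f t * P t) volume a b := by
  have hP_int := intervalIntegrable_of_antitoneOn hab hP
  rw [intervalIntegrable_iff_integrableOn_Ioc_of_le hab] at hf hP_int ⊢
  refine hf.mul_bdd (c := max |P b| |P a|) hP_int.aestronglyMeasurable ?_
  filter_upwards [ae_restrict_mem measurableSet_Ioc] with s hs
  have hs' := Ioc_subset_Icc_self hs
  exact abs_le_max_abs_abs (hP hs' (right_mem_Icc.2 hab) hs.2) (hP (left_mem_Icc.2 hab) hs' hs.1.le)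

lemma integral_le_mul_sub_of_antitoneOn (hab : a ≤ b) (hf : AntitoneOn f (Icc a b)) :
    ∫ t in a..b, f t ≤ f a * (b - a) := by
  calc ∫ t in a..b, f t ≤ ∫ _ in a..b, f a :=
        intervalIntegral.integral_mono_on hab (intervalIntegrable_of_antitoneOn hab hf)
          intervalIntegrable_const fun t ht => hf (left_mem_Icc.2 hab) ht ht.1
    _ = f a * (b - a) := by simp [mul_comm]

-- The primitive of a monotone function is convex, so it lies below the larger of its end values.
lemma integral_le_max_of_monotoneOn (hf : MonotoneOn f (Icc m u)) (hx : x ∈ Icc m u) :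
    ∫ t in m..x, f t ≤ max 0 (∫ t in m..u, f t) := by
  have hmu : m ≤ u := hx.1.trans hx.2
  have hf_int : IntervalIntegrable f volume m u :=
    MonotoneOn.intervalIntegrable (by rwa [uIcc_of_le hmu])
  have hmx := intervalIntegrable_of_mem_Icc hf_int (left_mem_Icc.2 hmu) hx
  have hxu := intervalIntegrable_of_mem_Icc hf_int hx (right_mem_Icc.2 hmu)
  rcases le_total (f x) 0 with hfx | hfx
  · refine le_max_of_le_left ?_
    calc ∫ t in m..x, f t ≤ ∫ _ in m..x, (0 : ℝ) :=
          intervalIntegral.integral_mono_on hx.1 hmx intervalIntegrable_const fun t ht =>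
            (hf ⟨ht.1, ht.2.trans hx.2⟩ hx ht.2).trans hfx
      _ = 0 := intervalIntegral.integral_zero
  · refine le_max_of_le_right ?_
    rw [← intervalIntegral.integral_add_adjacent_intervals hmx hxu]
    exact le_add_of_nonneg_right <| intervalIntegral.integral_nonneg hx.2 fun t ht =>
      hfx.trans (hf hx ⟨hx.1.trans ht.1, ht.2⟩ ht.1)

lemma integral_sub_const_eq (hf : IntervalIntegrable f volume a b) (c : ℝ) :
    ∫ t in a..b, (f t - c) = (∫ t in a..b, f t) - c * (b - a) := by
  rw [intervalIntegral.integral_sub hf intervalIntegrable_const,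
    intervalIntegral.integral_const, smul_eq_mul, mul_comm]

lemma mul_sub_le_integral_of_antitoneOn {v : ℝ} (hf : AntitoneOn f (Icc a u))
    (hv : v * (u - a) ≤ ∫ t in a..u, f t) (hx : x ∈ Icc a u) :
    v * (x - a) ≤ ∫ t in a..x, f t := by
  have hau : a ≤ u := hx.1.trans hx.2
  have hf_int := intervalIntegrable_of_antitoneOn hau hf
  have h_eq : ∀ y ∈ Icc a u, ∫ t in a..y, (v - f t) = v * (y - a) - ∫ t in a..y, f t := by
    intro y hy
    rw [intervalIntegral.integral_sub intervalIntegrable_const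
      (intervalIntegrable_of_mem_Icc hf_int (left_mem_Icc.2 hau) hy),
      intervalIntegral.integral_const, smul_eq_mul, mul_comm]
  have h_le := integral_le_max_of_monotoneOn
    (fun s hs t ht hst => sub_le_sub_left (hf hs ht hst) v) hx
  rw [h_eq x hx, h_eq u (right_mem_Icc.2 hau), max_eq_left (sub_nonpos.2 hv)] at h_le
  exact sub_nonpos.1 h_le

lemma integral_mul_le_integral_mul_of_antitoneOn {h Q : ℝ → ℝ} (hlu : l ≤ u)
    (hP : IntervalIntegrable P volume l u) (hQ : IntervalIntegrable Q volume l u)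
    (hPQ : ∀ x ∈ Icc l u, ∫ t in l..x, P t ≤ ∫ t in l..x, Q t)
    (hh : AntitoneOn h (Icc l u)) (hhu : 0 ≤ h u) :
    ∫ t in l..u, h t * P t ≤ ∫ t in l..u, h t * Q t := by
  have hl : l ∈ Icc l u := left_mem_Icc.2 hlu
  have h_diff : ∫ t in l..u, (P t - Q t) * h t ≤ 0 := by
    refine integral_mul_nonpos_of_antitoneOn hlu (hP.sub hQ) hh hhu fun x hx => ?_
    rw [intervalIntegral.integral_sub (intervalIntegrable_of_mem_Icc hP hl hx)
      (intervalIntegrable_of_mem_Icc hQ hl hx)]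
    exact sub_nonpos.2 (hPQ x hx)
  simp only [sub_mul] at h_diff
  rw [intervalIntegral.integral_sub (intervalIntegrable_mul_antitoneOn hlu hP hh)
    (intervalIntegrable_mul_antitoneOn hlu hQ hh), sub_nonpos] at h_diff
  simpa only [mul_comm] using h_diff

end MonotoneIntegrals

section SupportingSlope

/-- The line of slope `c` through `(a, G a)` lies above `G` on `[l, u]`, for `G` a primitive of
`g`: the optimality certificate for pooling from `a` on. -/
def IsSupportingSlope (g : ℝ → ℝ) (l u c a : ℝ) : Prop :=
  ∀ x ∈ Icc l u, ∫ t in a..x, g t ≤ c * (x - a)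

variable {g : ℝ → ℝ} {l m u c a : ℝ}

lemma IsSupportingSlope.le_of_antitoneOn (h : IsSupportingSlope g l u c a) (hau : a ≤ u)
    (hanti : AntitoneOn g (Icc l a)) {x : ℝ} (hx : x ∈ Ico l a) : c ≤ g x := by
  have h_line := h x ⟨hx.1, hx.2.le.trans hau⟩
  have h_upper := integral_le_mul_sub_of_antitoneOn hx.2.le (hanti.mono (Icc_subset_Icc_left hx.1))
  rw [intervalIntegral.integral_symm] at h_line
  refine le_of_mul_le_mul_right ?_ (sub_pos.2 hx.2)
  linarith

lemma isSupportingSlope_of_monotoneOn (hg : IntervalIntegrable g volume l u) (hm : m ∈ Icc l u)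
    (hmono : MonotoneOn g (Icc m u)) (ha : a ∈ Icc l m)
    (hleft : ∀ x ∈ Icc l m, ∫ t in a..x, g t ≤ c * (x - a))
    (hu : ∫ t in a..u, g t ≤ c * (u - a)) : IsSupportingSlope g l u c a := by
  intro x hx
  rcases le_total x m with hxm | hmx
  · exact hleft x ⟨hx.1, hxm⟩
  have ha' : a ∈ Icc l u := ⟨ha.1, ha.2.trans hm.2⟩
  have h_split : ∀ y ∈ Icc l u, (∫ t in a..y, g t) - c * (y - a) =
      ((∫ t in a..m, g t) - c * (m - a)) + ∫ t in m..y, (g t - c) := by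
    intro y hy
    rw [integral_sub_const_eq (intervalIntegrable_of_mem_Icc hg hm hy),
      ← intervalIntegral.integral_add_adjacent_intervals (intervalIntegrable_of_mem_Icc hg ha' hm)
        (intervalIntegrable_of_mem_Icc hg hm hy)]
    ring
  have h_max := integral_le_max_of_monotoneOn (f := fun t => g t - c)
    (fun s hs t ht hst => sub_le_sub_right (hmono hs ht hst) c) ⟨hmx, hx.2⟩
  have hm_le := hleft m ⟨hm.1, le_rfl⟩
  have hx_split := h_split x hx
  have hu_split := h_split u ⟨hm.1.trans hm.2, le_rfl⟩
  rcases le_max_iff.1 h_max with h | h <;> linarith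

-- The slope is the minimal average of `g` over `[x, u]` with `x ∈ [l, m]`.
lemma exists_isSupportingSlope_of_integral_pos (hg : IntervalIntegrable g volume l u)
    (hm : m ∈ Icc l u) (hmono : MonotoneOn g (Icc m u))
    (h_pos : ∀ x ∈ Icc l m, 0 < ∫ t in x..u, g t) :
    ∃ c a, 0 ≤ c ∧ a ∈ Icc l m ∧ IsSupportingSlope g l u c a ∧
      a < u ∧ ∫ t in a..u, g t = c * (u - a) := by
  have h_sub : Icc l m ⊆ Icc l u := Icc_subset_Icc_right hm.2
  have hmu : m < u := by
    refine hm.2.lt_of_ne ?_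
    rintro rfl
    simpa using h_pos m (right_mem_Icc.2 hm.1)
  have h_len : ∀ x ∈ Icc l m, 0 < u - x := fun x hx => sub_pos.2 (hx.2.trans_lt hmu)
  obtain ⟨a, ha, hmin⟩ := isCompact_Icc.exists_isMinOn (nonempty_Icc.2 hm.1)
    (((continuousOn_integral_left hg).mono h_sub).div (continuousOn_const.sub continuousOn_id)
      fun x hx => (h_len x hx).ne')
  set c := (∫ t in a..u, g t) / (u - a)
  have h_touch : ∫ t in a..u, g t = c * (u - a) := (div_mul_cancel₀ _ (h_len a ha).ne').symm
  refine ⟨c, a, (div_pos (h_pos a ha) (h_len a ha)).le, ha, ?_, ha.2.trans_lt hmu, h_touch⟩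
  refine isSupportingSlope_of_monotoneOn hg hm hmono ha (fun x hx => ?_) h_touch.le
  have h_avg : c * (u - x) ≤ ∫ t in x..u, g t := (le_div_iff₀ (h_len x hx)).1 (hmin hx)
  rw [integral_eq_sub_of_mem_Icc hg (h_sub ha) (h_sub hx), h_touch]
  linarith

theorem exists_isSupportingSlope (hg : IntervalIntegrable g volume l u) (hm : m ∈ Icc l u)
    (hmono : MonotoneOn g (Icc m u)) :
    ∃ c a, 0 ≤ c ∧ a ∈ Icc l m ∧ IsSupportingSlope g l u c a ∧
      (c = 0 ∨ a < u ∧ ∫ t in a..u, g t = c * (u - a)) := by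
  have h_sub : Icc l m ⊆ Icc l u := Icc_subset_Icc_right hm.2
  obtain ⟨a, ha, hmin⟩ := isCompact_Icc.exists_isMinOn (nonempty_Icc.2 hm.1)
    ((continuousOn_integral_left hg).mono h_sub)
  rcases le_or_gt (∫ t in a..u, g t) 0 with h_nonpos | h_pos
  · refine ⟨0, a, le_rfl, ha, ?_, Or.inl rfl⟩
    refine isSupportingSlope_of_monotoneOn hg hm hmono ha (fun x hx => ?_) (by simpa using h_nonpos)
    rw [integral_eq_sub_of_mem_Icc hg (h_sub ha) (h_sub hx), zero_mul]
    exact sub_nonpos.2 (hmin hx)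
  · obtain ⟨c, a', hc, ha', h_slope, h_touch⟩ :=
      exists_isSupportingSlope_of_integral_pos hg hm hmono fun x hx => h_pos.trans_le (hmin hx)
    exact ⟨c, a', hc, ha', h_slope, Or.inr h_touch⟩

end SupportingSlope

section FlattenFrom

/-- The function equal to `f` on `(-∞, a)` and to the constant `v` on `[a, ∞)`. Applied to the
majorant it is the pooled allocation, applied to `g` it is the ironed virtual surplus. -/
noncomputable def flattenFrom (f : ℝ → ℝ) (a v : ℝ) (s : ℝ) : ℝ :=
  if s < a then f s else v

variable {f p : ℝ → ℝ} {l u a v s : ℝ}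

lemma flattenFrom_of_lt (hs : s < a) : flattenFrom f a v s = f s := if_pos hs

lemma flattenFrom_of_le (hs : a ≤ s) : flattenFrom f a v s = v := if_neg hs.not_gt

lemma antitoneOn_flattenFrom (hf : AntitoneOn f (Icc l a)) (hv : ∀ s ∈ Ico l a, v ≤ f s) :
    AntitoneOn (flattenFrom f a v) (Ici l) := by
  intro s hs t ht hst
  rcases lt_or_ge t a with hta | hat
  · rw [flattenFrom_of_lt hta, flattenFrom_of_lt (hst.trans_lt hta)]
    exact hf ⟨hs, hst.trans hta.le⟩ ⟨ht, hta.le⟩ hst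
  rw [flattenFrom_of_le hat]
  rcases lt_or_ge s a with hsa | has
  · exact (hv s ⟨hs, hsa⟩).trans_eq (flattenFrom_of_lt hsa).symm
  · exact (flattenFrom_of_le has).ge

lemma integral_flattenFrom_mul (ha : a ∈ Icc l u)
    (hfp : IntervalIntegrable (fun t => f t * p t) volume l a)
    (hp : IntervalIntegrable p volume a u) :
    ∫ t in l..u, flattenFrom f a v t * p t = (∫ t in l..a, f t * p t) + v * ∫ t in a..u, p t := by
  have h_left : EqOn (fun t => f t * p t) (fun t => flattenFrom f a v t * p t) (uIoo l a) := by
    intro t ht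
    rw [uIoo_of_le ha.1] at ht
    simp only [flattenFrom_of_lt ht.2]
  have h_right : EqOn (fun t => v * p t) (fun t => flattenFrom f a v t * p t) (uIoo a u) := by
    intro t ht
    rw [uIoo_of_le ha.2] at ht
    simp only [flattenFrom_of_le ht.1.le]
  rw [← intervalIntegral.integral_add_adjacent_intervals (hfp.congr_uIoo h_left)
      ((hp.const_mul v).congr_uIoo h_right),
    ← intervalIntegral.integral_congr_uIoo h_left, ← intervalIntegral.integral_congr_uIoo h_right,
    intervalIntegral.integral_const_mul]

end FlattenFrom

section Allocations

/-- Feasible allocations on `[l, u]` for an arbitrary majorant `Q` in place of `(1 - t) ^ (n - 1)`.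
The bound `Q l` plays the role of the probability bound `1`. -/
structure IsFeasibleAllocation (Q : ℝ → ℝ) (l u : ℝ) (P : ℝ → ℝ) : Prop where
  mem_Icc : ∀ s ∈ Icc l u, P s ∈ Icc 0 (Q l)
  antitoneOn : AntitoneOn P (Icc l u)
  integral_le : ∀ x ∈ Icc l u, ∫ t in l..x, P t ≤ ∫ t in l..x, Q t

lemma feasible_iff_isFeasibleAllocation {n : ℕ} {P : ℝ → ℝ} :
    Feasible n P ↔ IsFeasibleAllocation (fun t => (1 - t) ^ (n - 1)) 0 1 P := by
  constructor <;> rintro ⟨hmem, hanti, hle⟩ <;> exact ⟨by simpa using hmem, hanti, hle⟩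

variable {g P Q : ℝ → ℝ} {l u a c v : ℝ}

lemma isFeasibleAllocation_flattenFrom (hQ : AntitoneOn Q (Icc l u)) (ha : a ∈ Icc l u)
    (hv : 0 ≤ v) (hva : v ≤ Q a) (hvu : v * (u - a) ≤ ∫ t in a..u, Q t) :
    IsFeasibleAllocation Q l u (flattenFrom Q a v) := by
  have hlu : l ≤ u := ha.1.trans ha.2
  have hl : l ∈ Icc l u := left_mem_Icc.2 hlu
  have hQ_int := intervalIntegrable_of_antitoneOn hlu hQ
  refine ⟨fun s hs => ?_, ?_, fun x hx => ?_⟩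
  · rcases lt_or_ge s a with hsa | has
    · rw [flattenFrom_of_lt hsa]
      exact ⟨(hv.trans hva).trans (hQ hs ha hsa.le), hQ hl hs hs.1⟩
    · rw [flattenFrom_of_le has]
      exact ⟨hv, hva.trans (hQ hl ha ha.1)⟩
  · exact (antitoneOn_flattenFrom (hQ.mono (Icc_subset_Icc_right ha.2)) fun s hs =>
      hva.trans (hQ ⟨hs.1, hs.2.le.trans ha.2⟩ ha hs.2.le)).mono Icc_subset_Ici_self
  · rcases le_total x a with hxa | hax
    · refine (intervalIntegral.integral_congr_uIoo fun t ht => ?_).le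
      rw [uIoo_of_le hx.1] at ht
      exact flattenFrom_of_lt (ht.2.trans_le hxa)
    · have h_flat := integral_flattenFrom_mul (f := Q) (p := fun _ => 1) (v := v) ⟨ha.1, hax⟩
        (by simpa using intervalIntegrable_of_mem_Icc hQ_int hl ha) intervalIntegrable_const
      simp only [mul_one, intervalIntegral.integral_const, smul_eq_mul] at h_flat
      rw [h_flat, ← intervalIntegral.integral_add_adjacent_intervals
        (intervalIntegrable_of_mem_Icc hQ_int hl ha) (intervalIntegrable_of_mem_Icc hQ_int ha hx)]
      gcongr
      exact mul_sub_le_integral_of_antitoneOn (hQ.mono (Icc_subset_Icc_left ha.1)) hvu ⟨hax, hx.2⟩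

lemma integral_mul_le_integral_flattenFrom_mul (hg : IntervalIntegrable g volume l u)
    (ha : a ∈ Icc l u) (h_slope : IsSupportingSlope g l u c a) (hP : AntitoneOn P (Icc l u))
    (hPu : 0 ≤ P u) : ∫ t in l..u, g t * P t ≤ ∫ t in l..u, flattenFrom g a c t * P t := by
  have hlu : l ≤ u := ha.1.trans ha.2
  have hl : l ∈ Icc l u := left_mem_Icc.2 hlu
  have hu : u ∈ Icc l u := right_mem_Icc.2 hlu
  have hgP := intervalIntegrable_mul_antitoneOn hlu hg hP
  have hgP_left := intervalIntegrable_of_mem_Icc hgP hl ha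
  have hgP_right := intervalIntegrable_of_mem_Icc hgP ha hu
  have hP_right := intervalIntegrable_of_mem_Icc (intervalIntegrable_of_antitoneOn hlu hP) ha hu
  have h_tail : ∫ t in a..u, (g t - c) * P t ≤ 0 := by
    refine integral_mul_nonpos_of_antitoneOn ha.2
      ((intervalIntegrable_of_mem_Icc hg ha hu).sub intervalIntegrable_const)
      (hP.mono (Icc_subset_Icc_left ha.1)) hPu fun x hx => ?_
    have hx' : x ∈ Icc l u := ⟨ha.1.trans hx.1, hx.2⟩
    rw [integral_sub_const_eq (intervalIntegrable_of_mem_Icc hg ha hx')]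
    exact sub_nonpos.2 (h_slope x hx')
  simp only [sub_mul] at h_tail
  rw [intervalIntegral.integral_sub hgP_right (hP_right.const_mul c),
    intervalIntegral.integral_const_mul, sub_nonpos] at h_tail
  rw [integral_flattenFrom_mul ha hgP_left hP_right,
    ← intervalIntegral.integral_add_adjacent_intervals hgP_left hgP_right]
  gcongr

theorem integral_mul_le_integral_mul_flattenFrom (hg : IntervalIntegrable g volume l u)
    (ha : a ∈ Icc l u) (hanti : AntitoneOn g (Icc l a)) (hc : 0 ≤ c)
    (h_slope : IsSupportingSlope g l u c a) (hQ : AntitoneOn Q (Icc l u))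
    (h_slack : c * ∫ t in a..u, Q t = v * ∫ t in a..u, g t)
    (hP : IsFeasibleAllocation Q l u P) :
    ∫ t in l..u, g t * P t ≤ ∫ t in l..u, g t * flattenFrom Q a v t := by
  have hlu : l ≤ u := ha.1.trans ha.2
  have hl : l ∈ Icc l u := left_mem_Icc.2 hlu
  have hu : u ∈ Icc l u := right_mem_Icc.2 hlu
  have hQ_int := intervalIntegrable_of_antitoneOn hlu hQ
  have hgQ := intervalIntegrable_of_mem_Icc (intervalIntegrable_mul_antitoneOn hlu hg hQ) hl ha
  have h_flat_anti : AntitoneOn (flattenFrom g a c) (Icc l u) :=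
    (antitoneOn_flattenFrom hanti fun s hs =>
      h_slope.le_of_antitoneOn ha.2 hanti hs).mono Icc_subset_Ici_self
  calc ∫ t in l..u, g t * P t
      ≤ ∫ t in l..u, flattenFrom g a c t * P t :=
        integral_mul_le_integral_flattenFrom_mul hg ha h_slope hP.antitoneOn (hP.mem_Icc u hu).1
    _ ≤ ∫ t in l..u, flattenFrom g a c t * Q t :=
        integral_mul_le_integral_mul_of_antitoneOn hlu
          (intervalIntegrable_of_antitoneOn hlu hP.antitoneOn) hQ_int hP.integral_le h_flat_anti
          (hc.trans_eq (flattenFrom_of_le ha.2).symm)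
    _ = (∫ t in l..a, g t * Q t) + c * ∫ t in a..u, Q t :=
        integral_flattenFrom_mul ha hgQ (intervalIntegrable_of_mem_Icc hQ_int ha hu)
    _ = (∫ t in l..a, Q t * g t) + v * ∫ t in a..u, g t := by simp only [h_slack, mul_comm]
    _ = ∫ t in l..u, flattenFrom Q a v t * g t :=
        (integral_flattenFrom_mul ha (by simpa only [mul_comm] using hgQ)
          (intervalIntegrable_of_mem_Icc hg ha hu)).symm
    _ = ∫ t in l..u, g t * flattenFrom Q a v t := by simp only [mul_comm]

theorem stmt_10_general {m : ℝ} (hQ : AntitoneOn Q (Icc l u)) (hQu : 0 ≤ Q u)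
    (hm : m ∈ Icc l u) (hanti : AntitoneOn g (Icc l m)) (hmono : MonotoneOn g (Icc m u)) :
    ∃ a S : ℝ, ∃ Phat : ℝ → ℝ, l ≤ a ∧ a ≤ S ∧ S ≤ u ∧
      (∀ s ∈ Ico l a, Phat s = Q s) ∧
      (∀ s ∈ Icc a S, Phat s = (1 / (S - a)) * ∫ t in a..S, Q t) ∧
      (∀ s ∈ Ioc S u, Phat s = 0) ∧
      IsFeasibleAllocation Q l u Phat ∧
      ∀ P : ℝ → ℝ, IsFeasibleAllocation Q l u P →
        ∫ s in l..u, g s * P s ≤ ∫ s in l..u, g s * Phat s := by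
  have hg := intervalIntegrable_of_antitoneOn_of_monotoneOn hm hanti hmono
  obtain ⟨c, a, hc, ha, h_slope, h_cases⟩ := exists_isSupportingSlope hg hm hmono
  have ha' : a ∈ Icc l u := ⟨ha.1, ha.2.trans hm.2⟩
  have hanti' := hanti.mono (Icc_subset_Icc_right ha.2)
  have hQ_nonneg : ∀ s ∈ Icc l u, 0 ≤ Q s := fun s hs =>
    hQu.trans (hQ hs (right_mem_Icc.2 (hm.1.trans hm.2)) hs.2)
  have hQ_tail : 0 ≤ ∫ t in a..u, Q t :=
    intervalIntegral.integral_nonneg ha'.2 fun t ht => hQ_nonneg t ⟨ha.1.trans ht.1, ht.2⟩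
  rcases h_cases with rfl | ⟨hau, h_touch⟩
  · refine ⟨a, a, flattenFrom Q a 0, ha.1, le_rfl, ha'.2, fun s hs => flattenFrom_of_lt hs.2,
      fun s hs => ?_, fun s hs => flattenFrom_of_le hs.1.le, ?_, fun P hP => ?_⟩
    · simp [flattenFrom_of_le hs.1]
    · exact isFeasibleAllocation_flattenFrom hQ ha' le_rfl (hQ_nonneg a ha') (by simpa)
    · exact integral_mul_le_integral_mul_flattenFrom hg ha' hanti' hc h_slope hQ (by simp) hP
  · set v := 1 / (u - a) * ∫ t in a..u, Q t with hv_def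
    have hlen : 0 < u - a := sub_pos.2 hau
    have hv_mul : v * (u - a) = ∫ t in a..u, Q t := by rw [hv_def]; field_simp
    have hv_le : v ≤ Q a := le_of_mul_le_mul_right (hv_mul.trans_le <|
      integral_le_mul_sub_of_antitoneOn hau.le (hQ.mono (Icc_subset_Icc_left ha.1))) hlen
    refine ⟨a, u, flattenFrom Q a v, ha.1, hau.le, le_rfl, fun s hs => flattenFrom_of_lt hs.2,
      fun s hs => flattenFrom_of_le hs.1, fun s hs => absurd hs.1 hs.2.not_gt, ?_, fun P hP => ?_⟩
    · exact isFeasibleAllocation_flattenFrom hQ ha' (by positivity) hv_le hv_mul.le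
    · refine integral_mul_le_integral_mul_flattenFrom hg ha' hanti' hc h_slope hQ ?_ hP
      rw [h_touch, ← hv_mul]
      ring

end Allocations

/-- If the quantile virtual surplus `g̃` is single-dipped, then an
allocation that follows `(1−s)^{n−1}` on `[0,a)`, pools on `[a,S]`, and excludes
`(S,1]` is feasible and maximizes `∫₀¹ g̃ P` over all feasible `P`. -/
theorem stmt_10 (n : ℕ) (hn : 2 ≤ n)
    (gt : ℝ → ℝ) (hgt_meas : Measurable gt)
    (hgt_bdd : ∃ C, ∀ s ∈ Icc (0:ℝ) 1, |gt s| ≤ C)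
    (m : ℝ) (hm : m ∈ Icc (0:ℝ) 1)
    (hgt_anti : AntitoneOn gt (Icc (0:ℝ) m))
    (hgt_mono : MonotoneOn gt (Icc m 1)) :
    ∃ a S : ℝ, ∃ Phat : ℝ → ℝ, 0 ≤ a ∧ a ≤ S ∧ S ≤ 1 ∧
      (∀ s ∈ Ico (0:ℝ) a, Phat s = (1 - s) ^ (n - 1)) ∧
      (∀ s ∈ Icc a S, Phat s = (1 / (S - a)) * ∫ t in a..S, (1 - t) ^ (n - 1)) ∧
      (∀ s ∈ Ioc S 1, Phat s = 0) ∧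
      Feasible n Phat ∧
      ∀ P : ℝ → ℝ, Feasible n P →
        (∫ s in (0:ℝ)..1, gt s * P s) ≤ ∫ s in (0:ℝ)..1, gt s * Phat s := by
  simp only [feasible_iff_isFeasibleAllocation]
  exact stmt_10_general
    (fun s _ t ht hst => pow_le_pow_left₀ (sub_nonneg.2 ht.2) (sub_le_sub_left hst 1) _)
    (by positivity) hm hgt_anti hgt_mono
end
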